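/- arXiv:1804.03043 — 3 statements merged into one kernel-verified Lean document; each statement's English description precedes it below -/
import Mathlib

section
/- Let λ > 0 be real, m ≥ 0 an integer, and let f(t) = Σ_{l=0}^{m} a_l C_l^λ(t) with real coefficients a_l (set a_{m+1} = 0). Then ∫_{−1}^{1} t · f(t)² · (1−t²)^{λ−1/2} dt = (√π · Γ(λ+1/2)/Γ(λ+1)) · Σ_{l=0}^{m−1} (λ²/((l+λ)(l+λ+1))) · (Γ(l+2λ+1)/(l!·Γ(2λ+1))) · 2 a_l a_{l+1}. -/
open Real Finset

/-- The Gegenbauer polynomials `C_l^λ`, defined by `C_0^λ(t) = 1`, `C_1^λ(t) = 2λt` and the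
recurrence `(l+1) C_{l+1}^λ(t) = 2(l+λ) t C_l^λ(t) − (l+2λ−1) C_{l−1}^λ(t)` for `l ≥ 1`. -/
noncomputable def gegenbauer (lam : ℝ) : ℕ → ℝ → ℝ
  | 0 => fun _ => 1
  | 1 => fun t => 2 * lam * t
  | (l + 2) => fun t =>
      (2 * ((l : ℝ) + 1 + lam) * t * gegenbauer lam (l + 1) t
        - ((l : ℝ) + 2 * lam) * gegenbauer lam l t) / ((l : ℝ) + 2)

/-!
The Gegenbauer differential equation says that `C_l` is an eigenfunction of a Sturm–Liouville
operator with weight `(1 - t²)^(λ - 1/2)`, so the weighted Wronskian of `C_k` and `C_l` vanishes at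
`±1` and has derivative a nonzero multiple of `C_k C_l (1 - t²)^(λ - 1/2)`: the `C_l` are
orthogonal. Since multiplication by `t` sends `C_l` to a combination of `C_{l-1}` and `C_{l+1}`,
only the neighbouring products `a_l a_{l+1}` survive in the first moment of `(∑ a_l C_l)²`.
Applying the recurrence to either factor of `t C_l C_{l+1}` expresses its integral through the norm
of `C_l` and through that of `C_{l+1}`; comparing the two gives all norms by induction, starting
from a Beta integral.
-/

lemma integral_rpow_mul_one_sub_rpow {a b : ℝ} (ha : 0 < a) (hb : 0 < b) :
    ∫ x in (0 : ℝ)..1, x ^ (a - 1) * (1 - x) ^ (b - 1) = ProbabilityTheory.beta a b := by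
  have hcast : Complex.betaIntegral a b =
      ((∫ x in (0 : ℝ)..1, x ^ (a - 1) * (1 - x) ^ (b - 1) : ℝ) : ℂ) := by
    rw [Complex.betaIntegral, ← intervalIntegral.integral_ofReal]
    refine intervalIntegral.integral_congr fun x hx => ?_
    rw [Set.uIcc_of_le zero_le_one] at hx
    simp [Complex.ofReal_cpow hx.1, Complex.ofReal_cpow (sub_nonneg.2 hx.2)]
  rw [ProbabilityTheory.beta_eq_betaIntegralReal a b ha hb, hcast, Complex.ofReal_re]

lemma integral_one_sub_sq_rpow_eq_beta {a : ℝ} (ha : 0 < a) :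
    ∫ t in (-1 : ℝ)..1, (1 - t ^ 2) ^ (a - 1) =
      2 ^ (2 * a - 1) * ProbabilityTheory.beta a a := by
  have hscale : ∀ x ∈ Set.uIcc (0 : ℝ) 1, (1 - (2 * x - 1) ^ 2) ^ (a - 1) =
      4 ^ (a - 1) * (x ^ (a - 1) * (1 - x) ^ (a - 1)) := by
    intro x hx
    rw [Set.uIcc_of_le zero_le_one] at hx
    have hx' : 0 ≤ 1 - x := sub_nonneg.2 hx.2
    rw [← mul_rpow hx.1 hx', ← mul_rpow (by norm_num) (mul_nonneg hx.1 hx')]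
    ring_nf
  have hfour : (2 : ℝ) * 4 ^ (a - 1) = 2 ^ (2 * a - 1) := by
    rw [show (4 : ℝ) = 2 ^ (2 : ℝ) by norm_num, ← rpow_mul zero_le_two,
      show 2 * a - 1 = 1 + 2 * (a - 1) by ring, rpow_add zero_lt_two, rpow_one]
  calc ∫ t in (-1 : ℝ)..1, (1 - t ^ 2) ^ (a - 1)
      = 2 * ∫ x in (0 : ℝ)..1, (1 - (2 * x - 1) ^ 2) ^ (a - 1) := by
        rw [← smul_eq_mul,
          intervalIntegral.smul_integral_comp_mul_sub (fun t : ℝ => (1 - t ^ 2) ^ (a - 1))]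
        norm_num
    _ = 2 ^ (2 * a - 1) * ProbabilityTheory.beta a a := by
        rw [intervalIntegral.integral_congr hscale, intervalIntegral.integral_const_mul,
          integral_rpow_mul_one_sub_rpow ha ha, ← mul_assoc, hfour]

theorem integral_one_sub_sq_rpow {a : ℝ} (ha : 0 < a) :
    ∫ t in (-1 : ℝ)..1, (1 - t ^ 2) ^ (a - 1) = √π * Gamma a / Gamma (a + 1 / 2) := by
  have hdup := Gamma_mul_Gamma_add_half a
  have hpow : (2 : ℝ) ^ (2 * a - 1) * 2 ^ (1 - 2 * a) = 1 := by
    rw [← rpow_add zero_lt_two, sub_add_sub_cancel, sub_self, rpow_zero]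
  have hGamma : Gamma (a + 1 / 2) ≠ 0 := (Gamma_pos_of_pos (by positivity)).ne'
  have hGamma' : Gamma (2 * a) ≠ 0 := (Gamma_pos_of_pos (by positivity)).ne'
  rw [integral_one_sub_sq_rpow_eq_beta ha, ProbabilityTheory.beta, ← two_mul, ← mul_div_assoc,
    div_eq_div_iff hGamma' hGamma]
  linear_combination 2 ^ (2 * a - 1) * Gamma a * hdup + √π * Gamma a * Gamma (2 * a) * hpow

lemma intervalIntegrable_one_sub_sq_rpow {a : ℝ} (ha : 0 < a) :
    IntervalIntegrable (fun t : ℝ => (1 - t ^ 2) ^ (a - 1)) MeasureTheory.volume (-1) 1 := by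
  refine intervalIntegral.intervalIntegrable_of_integral_ne_zero ?_
  rw [integral_one_sub_sq_rpow ha]
  exact (div_pos (mul_pos (sqrt_pos.2 pi_pos) (Gamma_pos_of_pos ha))
    (Gamma_pos_of_pos (by positivity))).ne'

lemma sum_sum_range_eq_of_tridiagonal {M : Type*} [AddCommMonoid M] {J : ℕ → ℕ → M}
    (hJ : ∀ k l, l ≠ k + 1 → k ≠ l + 1 → J k l = 0) (m : ℕ) :
    ∑ k ∈ range (m + 1), ∑ l ∈ range (m + 1), J k l =
      ∑ l ∈ range m, (J l (l + 1) + J (l + 1) l) := by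
  induction m with
  | zero => simp [hJ 0 0]
  | succ m ih =>
    have hcol : ∑ k ∈ range (m + 1), J k (m + 1) = J m (m + 1) := by
      refine sum_eq_single_of_mem m (by simp) fun k hk hkm => hJ _ _ ?_ ?_ <;> grind
    have hrow : ∑ l ∈ range (m + 1), J (m + 1) l = J (m + 1) m := by
      refine sum_eq_single_of_mem m (by simp) fun l hl hlm => hJ _ _ ?_ ?_ <;> grind
    have hdiag : J (m + 1) (m + 1) = 0 := hJ _ _ (by simp) (by simp)
    rw [sum_range_succ _ (m + 1)]
    simp only [sum_range_succ _ (m + 1)]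
    rw [sum_add_distrib, ih, hcol, hrow, hdiag, add_zero, sum_range_succ, add_assoc]

lemma natCast_add_ne_zero {R : Type*} [CommRing R] [LinearOrder R] [IsStrictOrderedRing R] {x : R}
    (hx : -1 < x) (hx0 : x ≠ 0) : ∀ n : ℕ, (n : R) + x ≠ 0
  | 0 => by simpa using hx0
  | n + 1 => by
    push_cast
    exact ne_of_gt (by linarith [n.cast_nonneg (α := R)])

section Derivatives

variable (lam : ℝ)

lemma add_two_mul_gegenbauer_add_two (l : ℕ) (t : ℝ) :
    ((l : ℝ) + 2) * gegenbauer lam (l + 2) t =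
      2 * ((l : ℝ) + 1 + lam) * t * gegenbauer lam (l + 1) t -
        ((l : ℝ) + 2 * lam) * gegenbauer lam l t := by
  have hl : (l : ℝ) + 2 ≠ 0 := by positivity
  simp only [gegenbauer]
  field_simp

lemma contDiff_gegenbauer {n : WithTop ℕ∞} : ∀ l : ℕ, ContDiff ℝ n (gegenbauer lam l)
  | 0 => by unfold gegenbauer; fun_prop
  | 1 => by unfold gegenbauer; fun_prop
  | l + 2 => by
    have hl := contDiff_gegenbauer (n := n) l
    have hl' := contDiff_gegenbauer (n := n) (l + 1)
    unfold gegenbauer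
    fun_prop

@[fun_prop]
lemma continuous_gegenbauer (l : ℕ) : Continuous (gegenbauer lam l) :=
  (contDiff_gegenbauer lam (n := 0) l).continuous

lemma differentiable_gegenbauer (l : ℕ) : Differentiable ℝ (gegenbauer lam l) :=
  (contDiff_gegenbauer lam l).differentiable one_ne_zero

lemma contDiff_deriv_gegenbauer (l : ℕ) : ContDiff ℝ 1 (deriv (gegenbauer lam l)) :=
  (contDiff_succ_iff_deriv.1 (contDiff_gegenbauer lam (n := 1 + 1) l)).2.2

lemma add_two_mul_deriv_gegenbauer_add_two (l : ℕ) (t : ℝ) :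
    ((l : ℝ) + 2) * deriv (gegenbauer lam (l + 2)) t =
      2 * ((l : ℝ) + 1 + lam) *
          (gegenbauer lam (l + 1) t + t * deriv (gegenbauer lam (l + 1)) t) -
        ((l : ℝ) + 2 * lam) * deriv (gegenbauer lam l) t := by
  have h (k : ℕ) := (differentiable_gegenbauer lam k t).hasDerivAt
  have hleft := (h (l + 2)).const_mul ((l : ℝ) + 2)
  have hright := (((hasDerivAt_id' t).const_mul (2 * ((l : ℝ) + 1 + lam))).mul (h (l + 1))).sub
    ((h l).const_mul ((l : ℝ) + 2 * lam))
  linear_combination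
    hleft.unique (hright.congr_of_eventuallyEq (.of_forall (add_two_mul_gegenbauer_add_two lam l)))

lemma deriv_gegenbauer_ladder (t : ℝ) : ∀ l : ℕ,
    deriv (gegenbauer lam (l + 1)) t =
        t * deriv (gegenbauer lam l) t + ((l : ℝ) + 2 * lam) * gegenbauer lam l t ∧
      t * deriv (gegenbauer lam (l + 1)) t - deriv (gegenbauer lam l) t =
        ((l : ℝ) + 1) * gegenbauer lam (l + 1) t
  | 0 => by
    have h0 : deriv (gegenbauer lam 0) t = 0 := deriv_const t 1
    have h1 : deriv (gegenbauer lam 1) t = 2 * lam :=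
      ((hasDerivAt_id' t).const_mul (2 * lam)).deriv.trans (mul_one _)
    rw [h0, h1]
    simp [gegenbauer, mul_comm]
  | l + 1 => by
    obtain ⟨hup, hdown⟩ := deriv_gegenbauer_ladder t l
    have hl : (l : ℝ) + 2 ≠ 0 := by positivity
    have hup' : deriv (gegenbauer lam (l + 2)) t =
        t * deriv (gegenbauer lam (l + 1)) t +
          ((l : ℝ) + 1 + 2 * lam) * gegenbauer lam (l + 1) t := by
      refine mul_left_cancel₀ hl ?_
      linear_combination add_two_mul_deriv_gegenbauer_add_two lam l t + ((l : ℝ) + 2 * lam) * hdown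
    push_cast
    refine ⟨hup', ?_⟩
    linear_combination t * hup' - add_two_mul_gegenbauer_add_two lam l t + t * hdown - hup

lemma one_sub_sq_mul_deriv_gegenbauer (l : ℕ) (t : ℝ) :
    (1 - t ^ 2) * deriv (gegenbauer lam l) t =
      ((l : ℝ) + 2 * lam) * t * gegenbauer lam l t -
        ((l : ℝ) + 1) * gegenbauer lam (l + 1) t := by
  obtain ⟨hup, hdown⟩ := deriv_gegenbauer_ladder lam t l
  linear_combination t * hup - hdown

theorem gegenbauer_differential_equation (l : ℕ) (t : ℝ) :
    (1 - t ^ 2) * deriv (deriv (gegenbauer lam l)) t -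
        (2 * lam + 1) * t * deriv (gegenbauer lam l) t +
      l * (l + 2 * lam) * gegenbauer lam l t = 0 := by
  have hC (k : ℕ) := (differentiable_gegenbauer lam k t).hasDerivAt
  have hC' := ((contDiff_deriv_gegenbauer lam l).differentiable one_ne_zero t).hasDerivAt
  have hleft := ((hasDerivAt_pow 2 t).const_sub 1).mul hC'
  have hright := (((hasDerivAt_id' t).const_mul ((l : ℝ) + 2 * lam)).mul (hC l)).sub
    ((hC (l + 1)).const_mul ((l : ℝ) + 1))
  have h := hleft.unique
    (hright.congr_of_eventuallyEq (.of_forall (one_sub_sq_mul_deriv_gegenbauer lam l)))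
  push_cast at h
  linear_combination h - ((l : ℝ) + 1) * (deriv_gegenbauer_ladder lam t l).1

lemma hasDerivAt_weighted_wronskian_gegenbauer (k l : ℕ) {t : ℝ} (ht : t ∈ Set.Ioo (-1) 1) :
    HasDerivAt
      (fun t => (1 - t ^ 2) ^ (lam + 1 / 2) *
        (gegenbauer lam k t * deriv (gegenbauer lam l) t -
          deriv (gegenbauer lam k) t * gegenbauer lam l t))
      (((k : ℝ) - l) * (k + l + 2 * lam) *
        (gegenbauer lam k t * gegenbauer lam l t * (1 - t ^ 2) ^ (lam - 1 / 2))) t := by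
  have hpos : 0 < 1 - t ^ 2 := by nlinarith [ht.1, ht.2]
  have hC (j : ℕ) := (differentiable_gegenbauer lam j t).hasDerivAt
  have hC' (j : ℕ) := ((contDiff_deriv_gegenbauer lam j).differentiable one_ne_zero t).hasDerivAt
  have hweight : HasDerivAt (fun t : ℝ => (1 - t ^ 2) ^ (lam + 1 / 2))
      (-(2 * lam + 1) * t * (1 - t ^ 2) ^ (lam - 1 / 2)) t := by
    convert ((hasDerivAt_pow 2 t).const_sub 1).rpow_const (p := lam + 1 / 2) (Or.inl hpos.ne')
      using 1
    ring_nf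
  have hsplit : (1 - t ^ 2) ^ (lam + 1 / 2) = (1 - t ^ 2) ^ (lam - 1 / 2) * (1 - t ^ 2) := by
    rw [← rpow_add_one hpos.ne']
    ring_nf
  refine (hweight.mul (((hC k).mul (hC' l)).sub ((hC' k).mul (hC l)))).congr_deriv ?_
  simp only [Pi.sub_apply, Pi.mul_apply, hsplit]
  linear_combination (1 - t ^ 2) ^ (lam - 1 / 2) *
    (gegenbauer lam k t * gegenbauer_differential_equation lam l t -
      gegenbauer lam l t * gegenbauer_differential_equation lam k t)

end Derivatives

/-- The functional `f ↦ ∫ f(t) (1 - t²)^(λ - 1/2) dt` over `[-1, 1]`, i.e. integration against the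
weight for which the Gegenbauer polynomials are orthogonal. -/
noncomputable def gegenbauerIntegral (lam : ℝ) (f : ℝ → ℝ) : ℝ :=
  ∫ t in (-1 : ℝ)..1, f t * (1 - t ^ 2) ^ (lam - 1 / 2)

section Orthogonality

variable {lam : ℝ}

lemma gegenbauerIntegral_const_mul (c : ℝ) (f : ℝ → ℝ) :
    gegenbauerIntegral lam (fun t => c * f t) = c * gegenbauerIntegral lam f := by
  simp only [gegenbauerIntegral, mul_assoc, intervalIntegral.integral_const_mul]

variable (hlam : -(1 / 2) < lam)
include hlam

lemma gegenbauerIntegral_one :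
    gegenbauerIntegral lam (fun _ => 1) = √π * Gamma (lam + 1 / 2) / Gamma (lam + 1) := by
  have h := integral_one_sub_sq_rpow (show 0 < lam + 1 / 2 by linarith)
  rw [show lam + 1 / 2 - 1 = lam - 1 / 2 by ring, show lam + 1 / 2 + 1 / 2 = lam + 1 by ring] at h
  simpa only [gegenbauerIntegral, one_mul] using h

lemma intervalIntegrable_mul_gegenbauer_weight {f : ℝ → ℝ} (hf : Continuous f) :
    IntervalIntegrable (fun t => f t * (1 - t ^ 2) ^ (lam - 1 / 2))
      MeasureTheory.volume (-1) 1 := by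
  have h := intervalIntegrable_one_sub_sq_rpow (show 0 < lam + 1 / 2 by linarith)
  rw [show lam + 1 / 2 - 1 = lam - 1 / 2 by ring] at h
  exact h.continuousOn_mul hf.continuousOn

lemma gegenbauerIntegral_add {f g : ℝ → ℝ} (hf : Continuous f) (hg : Continuous g) :
    gegenbauerIntegral lam (fun t => f t + g t) =
      gegenbauerIntegral lam f + gegenbauerIntegral lam g := by
  simp only [gegenbauerIntegral, add_mul]
  exact intervalIntegral.integral_add (intervalIntegrable_mul_gegenbauer_weight hlam hf)
    (intervalIntegrable_mul_gegenbauer_weight hlam hg)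

lemma gegenbauerIntegral_sum {ι : Type*} (s : Finset ι) {f : ι → ℝ → ℝ}
    (hf : ∀ i ∈ s, Continuous (f i)) :
    gegenbauerIntegral lam (fun t => ∑ i ∈ s, f i t) = ∑ i ∈ s, gegenbauerIntegral lam (f i) := by
  simp only [gegenbauerIntegral, sum_mul]
  exact intervalIntegral.integral_finsetSum fun i hi =>
    intervalIntegrable_mul_gegenbauer_weight hlam (hf i hi)

theorem gegenbauerIntegral_mul_eq_zero_of_ne {k l : ℕ} (hkl : k ≠ l) :
    gegenbauerIntegral lam (fun t => gegenbauer lam k t * gegenbauer lam l t) = 0 := by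
  have hexp : 0 < lam + 1 / 2 := by linarith
  have hk := (contDiff_deriv_gegenbauer lam k).continuous
  have hl := (contDiff_deriv_gegenbauer lam l).continuous
  have hweight : Continuous fun t : ℝ => (1 - t ^ 2) ^ (lam + 1 / 2) :=
    (by fun_prop : Continuous fun t : ℝ => 1 - t ^ 2).rpow_const fun _ => Or.inr hexp.le
  have hftc := intervalIntegral.integral_eq_sub_of_hasDerivAt_of_le (by norm_num)
    (Continuous.continuousOn (by fun_prop))
    (fun t ht => hasDerivAt_weighted_wronskian_gegenbauer lam k l ht)
    ((intervalIntegrable_mul_gegenbauer_weight hlam (by fun_prop)).const_mul _)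
  have hboundary : (1 - (1 : ℝ) ^ 2) ^ (lam + 1 / 2) = 0 ∧
      (1 - (-1 : ℝ) ^ 2) ^ (lam + 1 / 2) = 0 := by
    norm_num [zero_rpow hexp.ne']
  rw [hboundary.1, hboundary.2, zero_mul, zero_mul, sub_zero,
    intervalIntegral.integral_const_mul] at hftc
  have hsub : (k : ℝ) - l ≠ 0 := sub_ne_zero.2 (Nat.cast_injective.ne hkl)
  have hadd : (k : ℝ) + l + 2 * lam ≠ 0 := by
    have hone : (1 : ℝ) ≤ k + l := by exact_mod_cast (by omega : 1 ≤ k + l)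
    exact ne_of_gt (by linarith)
  exact (mul_eq_zero.1 hftc).resolve_left (mul_ne_zero hsub hadd)

end Orthogonality

/-- The matrix entry `∫ t C_k(t) C_l(t) (1 - t²)^(λ - 1/2) dt` of multiplication by `t` between two
Gegenbauer polynomials. -/
noncomputable def gegenbauerMoment (lam : ℝ) (k l : ℕ) : ℝ :=
  gegenbauerIntegral lam fun t => t * gegenbauer lam k t * gegenbauer lam l t

section Moments

variable {lam : ℝ}

lemma gegenbauerMoment_comm (k l : ℕ) : gegenbauerMoment lam k l = gegenbauerMoment lam l k := by
  simp only [gegenbauerMoment, mul_right_comm]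

lemma two_mul_gegenbauerMoment_zero_left (l : ℕ) :
    2 * lam * gegenbauerMoment lam 0 l =
      gegenbauerIntegral lam fun t => gegenbauer lam 1 t * gegenbauer lam l t := by
  rw [gegenbauerMoment, ← gegenbauerIntegral_const_mul]
  simp only [gegenbauer, mul_one, mul_assoc]

variable (hlam : -(1 / 2) < lam)
include hlam

lemma two_mul_gegenbauerMoment_succ_left (k l : ℕ) :
    2 * ((k : ℝ) + 1 + lam) * gegenbauerMoment lam (k + 1) l =
      ((k : ℝ) + 2) *
          gegenbauerIntegral lam (fun t => gegenbauer lam (k + 2) t * gegenbauer lam l t) +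
        ((k : ℝ) + 2 * lam) *
          gegenbauerIntegral lam (fun t => gegenbauer lam k t * gegenbauer lam l t) := by
  simp only [gegenbauerMoment, ← gegenbauerIntegral_const_mul]
  rw [← gegenbauerIntegral_add hlam (by fun_prop) (by fun_prop)]
  congr 1
  funext t
  linear_combination -gegenbauer lam l t * add_two_mul_gegenbauer_add_two lam k t

lemma gegenbauerMoment_eq_zero (hlam0 : lam ≠ 0) {k l : ℕ} (hkl : l ≠ k + 1) (hlk : k ≠ l + 1) :
    gegenbauerMoment lam k l = 0 := by
  cases k with
  | zero =>
    have h := two_mul_gegenbauerMoment_zero_left (lam := lam) l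
    rw [gegenbauerIntegral_mul_eq_zero_of_ne hlam hkl.symm] at h
    exact (mul_eq_zero.1 h).resolve_left (mul_ne_zero two_ne_zero hlam0)
  | succ k =>
    have h := two_mul_gegenbauerMoment_succ_left hlam k l
    rw [gegenbauerIntegral_mul_eq_zero_of_ne hlam hkl.symm,
      gegenbauerIntegral_mul_eq_zero_of_ne hlam (by omega), mul_zero, mul_zero, add_zero] at h
    have hcoeff : (k : ℝ) + 1 + lam ≠ 0 := ne_of_gt (by linarith [k.cast_nonneg (α := ℝ)])
    exact (mul_eq_zero.1 h).resolve_left (mul_ne_zero two_ne_zero hcoeff)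

lemma two_mul_gegenbauerMoment_eq_norm (k : ℕ) :
    2 * ((k : ℝ) + 1 + lam) * gegenbauerMoment lam k (k + 1) =
      ((k : ℝ) + 2 * lam) *
        gegenbauerIntegral lam (fun t => gegenbauer lam k t * gegenbauer lam k t) := by
  rw [gegenbauerMoment_comm, two_mul_gegenbauerMoment_succ_left hlam,
    gegenbauerIntegral_mul_eq_zero_of_ne hlam (by omega), mul_zero, zero_add]

lemma two_mul_gegenbauerMoment_eq_norm_succ : ∀ k : ℕ,
    2 * ((k : ℝ) + lam) * gegenbauerMoment lam k (k + 1) =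
      ((k : ℝ) + 1) *
        gegenbauerIntegral lam (fun t => gegenbauer lam (k + 1) t * gegenbauer lam (k + 1) t)
  | 0 => by simpa using two_mul_gegenbauerMoment_zero_left 1
  | k + 1 => by
    have h := two_mul_gegenbauerMoment_succ_left hlam k (k + 2)
    rw [gegenbauerIntegral_mul_eq_zero_of_ne hlam (by omega : k ≠ k + 2), mul_zero, add_zero] at h
    push_cast
    linear_combination h

lemma gegenbauerIntegral_mul_self_succ (k : ℕ) :
    ((k : ℝ) + 1) * (k + 1 + lam) *
        gegenbauerIntegral lam (fun t => gegenbauer lam (k + 1) t * gegenbauer lam (k + 1) t) =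
      (k + lam) * (k + 2 * lam) *
        gegenbauerIntegral lam (fun t => gegenbauer lam k t * gegenbauer lam k t) := by
  linear_combination ((k : ℝ) + lam) * two_mul_gegenbauerMoment_eq_norm hlam k -
    ((k : ℝ) + 1 + lam) * two_mul_gegenbauerMoment_eq_norm_succ hlam k

theorem gegenbauerIntegral_mul_self (hlam0 : lam ≠ 0) (k : ℕ) :
    gegenbauerIntegral lam (fun t => gegenbauer lam k t * gegenbauer lam k t) =
      √π * Gamma (lam + 1 / 2) / Gamma (lam + 1) *
        (lam / (k + lam) * (Gamma (k + 2 * lam) / (k.factorial * Gamma (2 * lam)))) := by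
  have hadd := natCast_add_ne_zero (by linarith : -1 < lam) hlam0
  have hadd2 := natCast_add_ne_zero (by linarith : -1 < 2 * lam) (mul_ne_zero two_ne_zero hlam0)
  have hGamma : Gamma (2 * lam) ≠ 0 :=
    Gamma_ne_zero fun n hn => hadd2 n (by rw [hn, add_neg_cancel])
  induction k with
  | zero =>
    rw [← gegenbauerIntegral_one hlam]
    simp [gegenbauer, hlam0, hGamma]
  | succ k ih =>
    have hk := hadd k
    have hk1 : (k : ℝ) + 1 + lam ≠ 0 := by exact_mod_cast hadd (k + 1)
    have hk0 : (k : ℝ) + 1 ≠ 0 := k.cast_add_one_ne_zero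
    refine mul_left_cancel₀ (mul_ne_zero hk0 hk1) ?_
    rw [gegenbauerIntegral_mul_self_succ hlam, ih, Nat.factorial_succ]
    push_cast
    rw [add_right_comm (k : ℝ) 1 (2 * lam), Gamma_add_one (hadd2 k)]
    field_simp

theorem gegenbauerMoment_self_succ (hlam0 : lam ≠ 0) (k : ℕ) :
    gegenbauerMoment lam k (k + 1) =
      √π * Gamma (lam + 1 / 2) / Gamma (lam + 1) *
        (lam ^ 2 / ((k + lam) * (k + lam + 1)) *
          (Gamma (k + 2 * lam + 1) / (k.factorial * Gamma (2 * lam + 1)))) := by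
  have hk := natCast_add_ne_zero (by linarith : -1 < lam) hlam0 k
  have hk1 : (k : ℝ) + lam + 1 ≠ 0 := ne_of_gt (by linarith [k.cast_nonneg (α := ℝ)])
  have h2lam := mul_ne_zero two_ne_zero hlam0
  have hk2 := natCast_add_ne_zero (by linarith : -1 < 2 * lam) h2lam k
  have h := two_mul_gegenbauerMoment_eq_norm hlam k
  rw [gegenbauerIntegral_mul_self hlam hlam0, add_right_comm (k : ℝ) 1 lam] at h
  refine mul_left_cancel₀ (mul_ne_zero two_ne_zero hk1) (h.trans ?_)
  rw [Gamma_add_one hk2, Gamma_add_one h2lam]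
  field_simp

lemma gegenbauerIntegral_mul_sum_sq (s : Finset ℕ) (a : ℕ → ℝ) :
    gegenbauerIntegral lam (fun t => t * (∑ l ∈ s, a l * gegenbauer lam l t) ^ 2) =
      ∑ k ∈ s, ∑ l ∈ s, a k * a l * gegenbauerMoment lam k l := by
  have hexpand (t : ℝ) : t * (∑ l ∈ s, a l * gegenbauer lam l t) ^ 2 =
      ∑ k ∈ s, ∑ l ∈ s, a k * a l * (t * gegenbauer lam k t * gegenbauer lam l t) := by
    rw [sq, sum_mul_sum]
    simp only [mul_sum]
    exact sum_congr rfl fun k _ => sum_congr rfl fun l _ => by ring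
  simp only [hexpand, gegenbauerMoment, ← gegenbauerIntegral_const_mul]
  rw [gegenbauerIntegral_sum hlam _ fun k _ => by fun_prop]
  exact sum_congr rfl fun k _ => gegenbauerIntegral_sum hlam _ fun l _ => by fun_prop

end Moments

theorem first_moment_zonal_general {lam : ℝ} (hlam : -(1 / 2) < lam) (hlam0 : lam ≠ 0) (m : ℕ)
    (a : ℕ → ℝ) :
    ∫ t in (-1 : ℝ)..1,
        t * (∑ l ∈ Finset.range (m + 1), a l * gegenbauer lam l t) ^ 2 *
          (1 - t ^ 2) ^ (lam - 1 / 2) =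
      Real.sqrt π * Real.Gamma (lam + 1 / 2) / Real.Gamma (lam + 1) *
        ∑ l ∈ Finset.range m,
          (lam ^ 2 / (((l : ℝ) + lam) * ((l : ℝ) + lam + 1))) *
            (Real.Gamma ((l : ℝ) + 2 * lam + 1) /
              ((Nat.factorial l : ℝ) * Real.Gamma (2 * lam + 1))) *
            (2 * a l * a (l + 1)) := by
  have htridiagonal (k l : ℕ) (hkl : l ≠ k + 1) (hlk : k ≠ l + 1) :
      a k * a l * gegenbauerMoment lam k l = 0 := by
    rw [gegenbauerMoment_eq_zero hlam hlam0 hkl hlk, mul_zero]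
  rw [← gegenbauerIntegral, gegenbauerIntegral_mul_sum_sq hlam,
    sum_sum_range_eq_of_tridiagonal htridiagonal, mul_sum]
  refine sum_congr rfl fun l _ => ?_
  rw [gegenbauerMoment_comm (l + 1) l, gegenbauerMoment_self_succ hlam hlam0]
  ring

/-- The space-domain first moment of a zonal function `f = Σ_{l=0}^m a_l C_l^λ`,
written as a one-dimensional weighted integral. -/
theorem first_moment_zonal (lam : ℝ) (hlam : 0 < lam) (m : ℕ) (a : ℕ → ℝ)
    (ha : a (m + 1) = 0) :
    ∫ t in (-1 : ℝ)..1,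
        t * (∑ l ∈ Finset.range (m + 1), a l * gegenbauer lam l t) ^ 2 *
          (1 - t ^ 2) ^ (lam - 1 / 2) =
      Real.sqrt π * Real.Gamma (lam + 1 / 2) / Real.Gamma (lam + 1) *
        ∑ l ∈ Finset.range m,
          (lam ^ 2 / (((l : ℝ) + lam) * ((l : ℝ) + lam + 1))) *
            (Real.Gamma ((l : ℝ) + 2 * lam + 1) /
              ((Nat.factorial l : ℝ) * Real.Gamma (2 * lam + 1))) *
            (2 * a l * a (l + 1)) := by
  exact first_moment_zonal_general (by linarith) hlam.ne' m a
end

section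
/- Let n ≥ 2, λ = (n−1)/2, j ≥ 1, and let φ_j(t) = 2^{−nj/2} Σ_{l=0}^{2^{j−1}−1} ((l+λ)/λ) C_l^λ(t). Then for every x ∈ S^n, (1/Σ_n) ∫_{S^n} φ_j(⟨x,y⟩)² dσ(y) = (n+2^j−2)·(n+2^{j−1}−2)! / (2^{nj}·n!·(2^{j−1}−1)!). -/
open Real Finset MeasureTheory Metric
open scoped RealInnerProductSpace

/-- The weighted scaling function of level `j` on the `n`-sphere, as a zonal function:
`φ_j(t) = 2^{−nj/2} Σ_{l=0}^{2^{j−1}−1} ((l+λ)/λ) C_l^λ(t)` with `λ = (n−1)/2`. -/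
noncomputable def scalingFn (n j : ℕ) : ℝ → ℝ :=
  fun t => (2 : ℝ) ^ (-((n * j : ℕ) : ℝ) / 2) *
    ∑ l ∈ Finset.range (2 ^ (j - 1)),
      (((l : ℝ) + ((n : ℝ) - 1) / 2) / (((n : ℝ) - 1) / 2)) *
        gegenbauer (((n : ℝ) - 1) / 2) l t

/-! Integrating a zonal function `y ↦ p ⟪x, y⟫` over the sphere is a linear functional of `p`. Its
moments are read off from the Gaussian integral of `⟪x, y⟫ ^ k`, computed both in polar coordinates
and in an orthonormal basis containing `x`; they show that it satisfies the integration by parts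
rule of the Gegenbauer weight `(1 - t ^ 2) ^ (λ - 1 / 2)`. By the Gegenbauer differential equation
the `C_l^λ` are then orthogonal, and the recurrence gives
`(l + λ) ‖C_l^λ‖² = λ C_l^λ(1) · (total mass)`. Hence `K = ∑ ((l + λ) / λ) C_l^λ` reproduces the
value at `1`, so that `‖K‖² = K(1) · (total mass)`, and `K(1)` has a closed form because the sums
`∑ (l + λ) C_l^λ(1)` telescope.
-/

section Gegenbauer

open Polynomial

/-- The Gegenbauer polynomial `C_l^λ` as an element of `ℝ[X]`; its evaluation is the function
`gegenbauer`. -/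
noncomputable def gegenbauerPoly (lam : ℝ) : ℕ → ℝ[X]
  | 0 => 1
  | 1 => C (2 * lam) * X
  | (l + 2) => C ((l : ℝ) + 2)⁻¹ *
      (2 * ((l : ℝ[X]) + 1 + C lam) * X * gegenbauerPoly lam (l + 1)
        - ((l : ℝ[X]) + 2 * C lam) * gegenbauerPoly lam l)

/-- The zonal kernel `∑_{l < N} ((l + λ) / λ) C_l^λ`. For `λ = (n - 1) / 2` it is, up to the total
mass of the sphere `S^n`, the reproducing kernel of the spherical polynomials of degree `< N`.
For `λ = 0` all coefficients are the junk value `0`. -/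
noncomputable def gegenbauerKernel (lam : ℝ) (N : ℕ) : ℝ[X] :=
  ∑ l ∈ range N, C ((l + lam) / lam) * gegenbauerPoly lam l

/-- A linear functional on polynomials which integrates by parts like
`p ↦ ∫ t in -1..1, p t * (1 - t ^ 2) ^ (λ - 1 / 2)`, the functional for which the Gegenbauer
polynomials `C_l^λ` are orthogonal. -/
def IsGegenbauerFunctional (lam : ℝ) (L : ℝ[X] →ₗ[ℝ] ℝ) : Prop :=
  ∀ p : ℝ[X], L ((1 - X ^ 2) * derivative p) = (2 * lam + 1) * L (X * p)

theorem eval_gegenbauerPoly (lam t : ℝ) (l : ℕ) :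
    (gegenbauerPoly lam l).eval t = gegenbauer lam l t := by
  induction l using Nat.twoStepInduction with
  | zero => simp [gegenbauerPoly, gegenbauer]
  | one => simp [gegenbauerPoly, gegenbauer]
  | more l ih ih' => simp [gegenbauerPoly, gegenbauer, ih, ih', div_eq_inv_mul]

theorem gegenbauerPoly_recurrence (lam : ℝ) (l : ℕ) :
    ((l : ℝ[X]) + 2) * gegenbauerPoly lam (l + 2) =
      2 * ((l : ℝ[X]) + 1 + C lam) * X * gegenbauerPoly lam (l + 1)
        - ((l : ℝ[X]) + 2 * C lam) * gegenbauerPoly lam l := by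
  have hl : ((l : ℝ[X]) + 2) * C ((l : ℝ) + 2)⁻¹ = 1 := by
    rw [show (l : ℝ[X]) + 2 = C ((l : ℝ) + 2) by simp [C_ofNat], ← C_mul,
      mul_inv_cancel₀ (by positivity), C_1]
  rw [gegenbauerPoly, ← mul_assoc, hl, one_mul]

theorem derivative_and_X_mul_derivative_gegenbauerPoly_succ (lam : ℝ) (l : ℕ) :
    derivative (gegenbauerPoly lam (l + 1)) =
        X * derivative (gegenbauerPoly lam l) + ((l : ℝ[X]) + 2 * C lam) * gegenbauerPoly lam l ∧
      X * derivative (gegenbauerPoly lam (l + 1)) =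
        derivative (gegenbauerPoly lam l) + ((l : ℝ[X]) + 1) * gegenbauerPoly lam (l + 1) := by
  induction l with
  | zero => simp [gegenbauerPoly, mul_comm, C_ofNat]
  | succ l ih =>
    obtain ⟨raise, lower⟩ := ih
    have recurrence := gegenbauerPoly_recurrence lam l
    have recurrence' := congrArg derivative recurrence
    simp only [derivative_mul, derivative_sub, derivative_add, derivative_C, derivative_X,
      derivative_natCast, derivative_ofNat, derivative_one] at recurrence'
    have hl : (l : ℝ[X]) + 2 ≠ 0 := by exact_mod_cast (Nat.succ_ne_zero (l + 1))
    have raise' : derivative (gegenbauerPoly lam (l + 2)) =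
        X * derivative (gegenbauerPoly lam (l + 1))
          + ((l : ℝ[X]) + 1 + 2 * C lam) * gegenbauerPoly lam (l + 1) := by
      apply mul_left_cancel₀ hl
      linear_combination recurrence' + ((l : ℝ[X]) + 2 * C lam) * lower
    push_cast
    refine ⟨raise', ?_⟩
    linear_combination X * raise' - raise + X * lower - recurrence

theorem gegenbauerPoly_ode (lam : ℝ) (l : ℕ) :
    (1 - X ^ 2) * derivative (derivative (gegenbauerPoly lam l)) =
      (2 * C lam + 1) * X * derivative (gegenbauerPoly lam l)
        - (l : ℝ[X]) * ((l : ℝ[X]) + 2 * C lam) * gegenbauerPoly lam l := by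
  cases l with
  | zero => simp [gegenbauerPoly]
  | succ l =>
    obtain ⟨raise, lower⟩ := derivative_and_X_mul_derivative_gegenbauerPoly_succ lam l
    have firstOrder : (1 - X ^ 2) * derivative (gegenbauerPoly lam (l + 1)) =
        ((l : ℝ[X]) + 2 * C lam) * gegenbauerPoly lam l
          - ((l : ℝ[X]) + 1) * X * gegenbauerPoly lam (l + 1) := by
      linear_combination raise - X * lower
    have firstOrder' := congrArg derivative firstOrder
    simp only [derivative_mul, derivative_sub, derivative_add, derivative_C, derivative_X,
      derivative_natCast, derivative_ofNat, derivative_one, derivative_X_pow,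
      Nat.cast_ofNat, C_ofNat] at firstOrder'
    push_cast
    linear_combination firstOrder' - ((l : ℝ[X]) + 2 * C lam) * lower

theorem eval_one_gegenbauerPoly_succ (lam : ℝ) (l : ℕ) :
    (l + 1) * (gegenbauerPoly lam (l + 1)).eval 1 =
      (l + 2 * lam) * (gegenbauerPoly lam l).eval 1 := by
  obtain ⟨raise, lower⟩ := derivative_and_X_mul_derivative_gegenbauerPoly_succ lam l
  have raise_one := congrArg (eval 1) raise
  have lower_one := congrArg (eval 1) lower
  simp only [eval_add, eval_mul, eval_X, eval_natCast, eval_ofNat, eval_C, eval_one]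
    at raise_one lower_one
  linarith

theorem eval_one_gegenbauerPoly_mul_factorial (lam : ℝ) (l : ℕ) :
    (gegenbauerPoly lam l).eval 1 * l.factorial = (ascPochhammer ℝ l).eval (2 * lam) := by
  induction l with
  | zero => simp [gegenbauerPoly]
  | succ l ih =>
    rw [ascPochhammer_succ_eval, ← ih, Nat.factorial_succ]
    push_cast
    linear_combination (l.factorial : ℝ) * eval_one_gegenbauerPoly_succ lam l

theorem eval_one_gegenbauerPoly_natCast_succ_div_two (d l : ℕ) :
    (gegenbauerPoly ((d + 1) / 2) l).eval 1 =
      ((d + l).factorial : ℝ) / (d.factorial * l.factorial) := by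
  have pochhammer := eval_one_gegenbauerPoly_mul_factorial ((d + 1) / 2) l
  rw [mul_div_cancel₀ _ two_ne_zero, ← Nat.cast_succ, ← ascPochhammer_eval_cast,
    ascPochhammer_nat_eq_ascFactorial] at pochhammer
  rw [eq_div_iff (by positivity), ← Nat.factorial_mul_ascFactorial, Nat.cast_mul, ← pochhammer]
  push_cast
  ring

theorem sum_eval_one_gegenbauerPoly (lam : ℝ) (N : ℕ) :
    2 * (2 * lam + 1) * ∑ l ∈ range N, (l + lam) * (gegenbauerPoly lam l).eval 1 =
      (2 * N - 1 + 2 * lam) * N * (gegenbauerPoly lam N).eval 1 := by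
  induction N with
  | zero => simp
  | succ N ih =>
    rw [sum_range_succ, mul_add, ih]
    push_cast
    linear_combination -(2 * N + 1 + 2 * lam) * eval_one_gegenbauerPoly_succ lam N

theorem eval_gegenbauerKernel (lam t : ℝ) (N : ℕ) :
    (gegenbauerKernel lam N).eval t = ∑ l ∈ range N, (l + lam) / lam * gegenbauer lam l t := by
  simp [gegenbauerKernel, eval_finsetSum, eval_gegenbauerPoly]

theorem eval_one_gegenbauerKernel (d K : ℕ) :
    (gegenbauerKernel ((d + 1) / 2) (K + 1)).eval 1 =
      (d + 2 * K + 2) * (d + K + 1).factorial / ((d + 2).factorial * K.factorial) := by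
  have kernel_sum : (gegenbauerKernel ((d + 1) / 2) (K + 1)).eval 1 = 2 / (d + 1) *
      ∑ l ∈ range (K + 1),
        (l + ((d : ℝ) + 1) / 2) * (gegenbauerPoly ((d + 1) / 2) l).eval 1 := by
    simp only [gegenbauerKernel, eval_finsetSum, eval_mul, eval_C, mul_sum]
    refine sum_congr rfl fun l _ => ?_
    field_simp
  have closed_form := sum_eval_one_gegenbauerPoly ((d + 1) / 2) (K + 1)
  rw [mul_comm, ← eq_div_iff (by positivity)] at closed_form
  rw [kernel_sum, closed_form, eval_one_gegenbauerPoly_natCast_succ_div_two, ← add_assoc]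
  simp only [Nat.factorial_succ]
  push_cast
  field_simp
  ring

theorem map_gegenbauerPoly_recurrence_mul (L : ℝ[X] →ₗ[ℝ] ℝ) (lam : ℝ) (l : ℕ) (q : ℝ[X]) :
    (l + 2) * L (gegenbauerPoly lam (l + 2) * q) =
      2 * (l + 1 + lam) * L (X * gegenbauerPoly lam (l + 1) * q)
        - (l + 2 * lam) * L (gegenbauerPoly lam l * q) := by
  have recurrence : C ((l : ℝ) + 2) * (gegenbauerPoly lam (l + 2) * q) =
      C (2 * (l + 1 + lam)) * (X * gegenbauerPoly lam (l + 1) * q)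
        - C (l + 2 * lam) * (gegenbauerPoly lam l * q) := by
    simp only [C_add, C_mul, C_ofNat, C_1, C_eq_natCast]
    linear_combination q * gegenbauerPoly_recurrence lam l
  simpa only [C_mul', map_sub, map_smul, smul_eq_mul] using congrArg L recurrence

namespace IsGegenbauerFunctional

variable {lam : ℝ} {L : ℝ[X] →ₗ[ℝ] ℝ}

theorem of_moments (moment_one : L X = 0)
    (moment_add_two : ∀ k : ℕ,
      (2 * lam + k + 2) * L (X ^ (k + 2)) = (k + 1) * L (X ^ k)) :
    IsGegenbauerFunctional lam L := by
  intro p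
  induction p using Polynomial.induction_on' with
  | add p q hp hq => simp only [mul_add, map_add, hp, hq]
  | monomial k a =>
    rw [← C_mul_X_pow_eq_monomial]
    rcases k with _ | k
    · simp [mul_comm X, C_mul', moment_one]
    · have lhs : (1 - X ^ 2) * derivative (C a * X ^ (k + 1)) =
          C (a * (k + 1)) * X ^ k - C (a * (k + 1)) * X ^ (k + 2) := by
        simp only [derivative_C_mul_X_pow]
        push_cast
        ring
      have rhs : X * (C a * X ^ (k + 1)) = C a * X ^ (k + 2) := by ring
      rw [lhs, rhs]
      simp only [C_mul', map_sub, map_smul, smul_eq_mul]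
      linear_combination -a * moment_add_two k

/-- Lagrange's identity turns `C_l'' C_m - C_l C_m''` into a total derivative. -/
theorem map_gegenbauerPoly_mul_of_ne (hL : IsGegenbauerFunctional lam L) (hlam : -1 / 2 < lam)
    {l m : ℕ} (hlm : l ≠ m) : L (gegenbauerPoly lam l * gegenbauerPoly lam m) = 0 := by
  set p := gegenbauerPoly lam l
  set q := gegenbauerPoly lam m
  have lagrange : (1 - X ^ 2) * derivative (p * derivative q - derivative p * q) =
      C (2 * lam + 1) * (X * (p * derivative q - derivative p * q))
        + C (l * (l + 2 * lam) - m * (m + 2 * lam)) * (p * q) := by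
    simp only [derivative_sub, derivative_mul, C_add, C_sub, C_mul, C_ofNat, C_1, C_eq_natCast]
    linear_combination p * gegenbauerPoly_ode lam m - q * gegenbauerPoly_ode lam l
  have eigenvalue_mul : (l * (l + 2 * lam) - m * (m + 2 * lam)) * L (p * q) = 0 := by
    have := hL (p * derivative q - derivative p * q)
    rw [lagrange, C_mul', C_mul', map_add, map_smul, map_smul, smul_eq_mul, smul_eq_mul] at this
    linarith
  have eigenvalue_ne : (l * (l + 2 * lam) - m * (m + 2 * lam) : ℝ) ≠ 0 := by
    have hsum : (1 : ℝ) ≤ l + m := by exact_mod_cast (by omega : 1 ≤ l + m)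
    have hsub : (l : ℝ) - m ≠ 0 := sub_ne_zero.mpr (by exact_mod_cast hlm)
    have hadd : (l : ℝ) + m + 2 * lam ≠ 0 := by linarith
    convert mul_ne_zero hsub hadd using 1
    ring
  exact (mul_eq_zero.mp eigenvalue_mul).resolve_left eigenvalue_ne

theorem succ_mul_map_gegenbauerPoly_succ_sq (hL : IsGegenbauerFunctional lam L)
    (hlam : -1 / 2 < lam) (l : ℕ) :
    (l + 1) * L (gegenbauerPoly lam (l + 1) ^ 2) =
      2 * (l + lam) * L (X * gegenbauerPoly lam l * gegenbauerPoly lam (l + 1)) := by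
  cases l with
  | zero =>
    have : gegenbauerPoly lam 1 ^ 2 =
        C (2 * lam) * (X * gegenbauerPoly lam 0 * gegenbauerPoly lam 1) := by
      simp only [gegenbauerPoly]
      ring
    rw [this, C_mul', map_smul, smul_eq_mul]
    simp
  | succ l =>
    have := map_gegenbauerPoly_recurrence_mul L lam l (gegenbauerPoly lam (l + 2))
    rw [hL.map_gegenbauerPoly_mul_of_ne hlam (by omega : l ≠ l + 2), ← sq] at this
    push_cast
    linarith

theorem map_X_mul_gegenbauerPoly_mul_succ (hL : IsGegenbauerFunctional lam L)
    (hlam : -1 / 2 < lam) (l : ℕ) :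
    2 * (l + 1 + lam) * L (X * gegenbauerPoly lam l * gegenbauerPoly lam (l + 1)) =
      (l + 2 * lam) * L (gegenbauerPoly lam l ^ 2) := by
  have := map_gegenbauerPoly_recurrence_mul L lam l (gegenbauerPoly lam l)
  rw [hL.map_gegenbauerPoly_mul_of_ne hlam (by omega : l + 2 ≠ l), ← sq, mul_right_comm X] at this
  linarith

theorem map_gegenbauerPoly_sq (hL : IsGegenbauerFunctional lam L) (hlam : -1 / 2 < lam) (l : ℕ) :
    (l + lam) * L (gegenbauerPoly lam l ^ 2) = lam * (gegenbauerPoly lam l).eval 1 * L 1 := by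
  induction l with
  | zero => simp [gegenbauerPoly]
  | succ l ih =>
    have hl : (l : ℝ) + 1 ≠ 0 := by positivity
    push_cast
    apply mul_left_cancel₀ hl
    linear_combination (l + 1 + lam) * hL.succ_mul_map_gegenbauerPoly_succ_sq hlam l
      + (l + lam) * hL.map_X_mul_gegenbauerPoly_mul_succ hlam l + (l + 2 * lam) * ih
      - lam * L 1 * eval_one_gegenbauerPoly_succ lam l

theorem map_gegenbauerKernel_mul (hL : IsGegenbauerFunctional lam L) (hlam : -1 / 2 < lam)
    (hlam₀ : lam ≠ 0) {m N : ℕ} (hm : m < N) :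
    L (gegenbauerKernel lam N * gegenbauerPoly lam m) = (gegenbauerPoly lam m).eval 1 * L 1 := by
  simp only [gegenbauerKernel, sum_mul, C_mul', smul_mul_assoc, map_sum, map_smul,
    smul_eq_mul]
  rw [sum_eq_single_of_mem m (mem_range.mpr hm)
    fun l _ hlm => by rw [hL.map_gegenbauerPoly_mul_of_ne hlam hlm, mul_zero], ← sq,
    div_mul_eq_mul_div, hL.map_gegenbauerPoly_sq hlam]
  field_simp

theorem map_gegenbauerKernel_sq (hL : IsGegenbauerFunctional lam L) (hlam : -1 / 2 < lam)
    (hlam₀ : lam ≠ 0) (N : ℕ) :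
    L (gegenbauerKernel lam N ^ 2) = (gegenbauerKernel lam N).eval 1 * L 1 := by
  calc L (gegenbauerKernel lam N ^ 2)
      = ∑ l ∈ range N, (l + lam) / lam * L (gegenbauerKernel lam N * gegenbauerPoly lam l) := by
        rw [sq]
        conv_lhs => enter [2, 2]; rw [gegenbauerKernel]
        simp only [mul_sum, C_mul', mul_smul_comm, map_sum, map_smul, smul_eq_mul]
    _ = ∑ l ∈ range N, (l + lam) / lam * ((gegenbauerPoly lam l).eval 1 * L 1) :=
        sum_congr rfl fun l hl => by
          rw [hL.map_gegenbauerKernel_mul hlam hlam₀ (mem_range.mp hl)]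
    _ = (gegenbauerKernel lam N).eval 1 * L 1 := by
        simp only [gegenbauerKernel, eval_finsetSum, eval_mul, eval_C, sum_mul, mul_assoc]

end IsGegenbauerFunctional

end Gegenbauer

section GaussianMoments

theorem integral_exp_neg_sq : ∫ t : ℝ, exp (-t ^ 2) = √π := by
  simpa using integral_gaussian 1

theorem integral_Ioi_pow_mul_exp_neg_sq (k : ℕ) :
    ∫ r in Set.Ioi (0 : ℝ), r ^ k * exp (-r ^ 2) = Gamma ((k + 1) / 2) / 2 := by
  have h := integral_rpow_mul_exp_neg_rpow (p := 2) (q := k) two_pos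
    (neg_one_lt_zero.trans_le k.cast_nonneg)
  simp only [rpow_natCast, rpow_ofNat] at h
  rw [h]
  ring

theorem integral_pow_mul_exp_neg_sq_of_odd {k : ℕ} (hk : Odd k) :
    ∫ t : ℝ, t ^ k * exp (-t ^ 2) = 0 := by
  have h := integral_neg_eq_self (fun t : ℝ => t ^ k * exp (-t ^ 2)) volume
  simp only [hk.neg_pow, neg_sq, neg_mul, integral_neg] at h
  linarith

theorem integral_pow_mul_exp_neg_sq_of_even {k : ℕ} (hk : Even k) :
    ∫ t : ℝ, t ^ k * exp (-t ^ 2) = Gamma ((k + 1) / 2) := by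
  have h := integral_comp_abs (f := fun t : ℝ => t ^ k * exp (-t ^ 2))
  simp only [hk.pow_abs, sq_abs] at h
  rw [h, integral_Ioi_pow_mul_exp_neg_sq]
  ring

theorem integral_pow_add_two_mul_exp_neg_sq (k : ℕ) :
    ∫ t : ℝ, t ^ (k + 2) * exp (-t ^ 2) = (k + 1) / 2 * ∫ t : ℝ, t ^ k * exp (-t ^ 2) := by
  rcases k.even_or_odd with hk | hk
  · rw [integral_pow_mul_exp_neg_sq_of_even hk,
      integral_pow_mul_exp_neg_sq_of_even (hk.add even_two), ← Gamma_add_one (by positivity)]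
    push_cast
    ring_nf
  · rw [integral_pow_mul_exp_neg_sq_of_odd hk,
      integral_pow_mul_exp_neg_sq_of_odd (hk.add_even even_two), mul_zero]

end GaussianMoments

section PolarCoordinates

variable {E F : Type*} [NormedAddCommGroup E] [NormedSpace ℝ E] [FiniteDimensional ℝ E]
  [Nontrivial E] [MeasurableSpace E] [BorelSpace E] [NormedAddCommGroup F] [NormedSpace ℝ F]

theorem integral_volumeIoiPow (n : ℕ) (g : ℝ → F) :
    ∫ r : Set.Ioi (0 : ℝ), g r ∂Measure.volumeIoiPow n =
      ∫ r in Set.Ioi (0 : ℝ), r ^ n • g r := by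
  simp only [Measure.volumeIoiPow, ENNReal.ofReal]
  rw [integral_withDensity_eq_integral_smul
      (measurable_subtype_coe.pow_const n).real_toNNReal,
    integral_subtype_comap measurableSet_Ioi fun r : ℝ => Real.toNNReal (r ^ n) • g r]
  refine setIntegral_congr_fun measurableSet_Ioi fun r hr => ?_
  rw [NNReal.smul_def, coe_toNNReal _ (pow_nonneg (le_of_lt hr) n)]

theorem integral_homogeneous_smul_comp_norm (μ : Measure E) [μ.IsAddHaarMeasure] {k : ℕ}
    {f : E → ℝ} (hf : ∀ (r : ℝ) (y : E), f (r • y) = r ^ k * f y) (g : ℝ → F) :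
    ∫ y, f y • g ‖y‖ ∂μ = (∫ y : sphere (0 : E) 1, f y ∂μ.toSphere) •
      ∫ r in Set.Ioi (0 : ℝ), r ^ (Module.finrank ℝ E - 1 + k) • g r :=
  calc
    ∫ y, f y • g ‖y‖ ∂μ = ∫ y : ({0}ᶜ : Set E), f y • g ‖(y : E)‖ ∂μ.comap (↑) := by
      rw [integral_subtype_comap (measurableSet_singleton _).compl fun y => f y • g ‖y‖,
        restrict_compl_singleton]
    _ = ∫ z : sphere (0 : E) 1 × Set.Ioi (0 : ℝ), f z.1 • ((z.2 : ℝ) ^ k • g z.2)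
          ∂μ.toSphere.prod (.volumeIoiPow (Module.finrank ℝ E - 1)) := by
      rw [← μ.measurePreserving_homeomorphUnitSphereProd.integral_comp
        (Homeomorph.measurableEmbedding _)]
      refine integral_congr_ae (.of_forall fun y => ?_)
      have hy : ‖(y : E)‖ ≠ 0 := norm_ne_zero_iff.mpr y.2
      simp only [homeomorphUnitSphereProd_apply_snd_coe,
        homeomorphUnitSphereProd_apply_fst_coe, hf, smul_smul]
      congr 1
      rw [mul_right_comm, ← mul_pow, inv_mul_cancel₀ hy, one_pow, one_mul]
    _ = _ := by
      rw [integral_prod_smul (fun y : sphere (0 : E) 1 => f y)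
        (fun r : Set.Ioi (0 : ℝ) => (r : ℝ) ^ k • g r),
        integral_volumeIoiPow _ fun r => r ^ k • g r]
      simp only [smul_smul, pow_add]

end PolarCoordinates

section Zonal

variable {E : Type*} [NormedAddCommGroup E] [InnerProductSpace ℝ E] [FiniteDimensional ℝ E]
  [MeasurableSpace E] [BorelSpace E]

theorem integral_prod_comp_inner {ι : Type*} [Fintype ι] (b : OrthonormalBasis ι ℝ E)
    (f : ι → ℝ → ℝ) : ∫ y, ∏ i, f i ⟪b i, y⟫ = ∏ i, ∫ t, f i t := by
  rw [← integral_fintype_prod_volume_eq_prod,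
    ← b.measurePreserving_repr_symm.integral_comp b.repr.symm.toHomeomorph.measurableEmbedding,
    ← (PiLp.volume_preserving_toLp ι).integral_comp
      (MeasurableEquiv.toLp 2 (ι → ℝ)).measurableEmbedding]
  simp [← b.repr_apply_apply]

theorem integral_comp_inner_mul_exp_neg_norm_sq {x : E} (hx : ‖x‖ = 1) (g : ℝ → ℝ) :
    ∫ y, g ⟪x, y⟫ * exp (-‖y‖ ^ 2) =
      (∫ t, g t * exp (-t ^ 2)) * √π ^ (Module.finrank ℝ E - 1) := by
  classical
  obtain ⟨u, b, hxu, hb⟩ := Orthonormal.exists_orthonormalBasis_extension (𝕜 := ℝ) (v := {x})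
    (orthonormal_subsingleton_iff.mpr (by simpa using hx))
  let i₀ : u := ⟨x, hxu rfl⟩
  have hb₀ : b i₀ = x := by rw [hb]
  have integrand (y : E) : g ⟪x, y⟫ * exp (-‖y‖ ^ 2) =
      ∏ i, (if i = i₀ then g ⟪b i, y⟫ else 1) * exp (-⟪b i, y⟫ ^ 2) := by
    rw [prod_mul_distrib, ← exp_sum, sum_neg_distrib, b.sum_sq_inner_right,
      Fintype.prod_ite_eq', hb₀]
  simp_rw [integrand]
  rw [integral_prod_comp_inner b fun i t => (if i = i₀ then g t else 1) * exp (-t ^ 2),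
    Fintype.prod_eq_mul_prod_compl i₀]
  congr 1
  · simp
  · rw [Finset.prod_congr rfl (g := fun _ => √π) fun i hi => by simp_all [integral_exp_neg_sq],
      prod_const, card_compl, card_singleton, ← Module.finrank_eq_card_basis b.toBasis]

open Polynomial in
/-- Integration over the unit sphere of the zonal function `y ↦ p ⟪x, y⟫`, as a linear functional
of the polynomial `p`. -/
noncomputable def zonalIntegral (x : E) : ℝ[X] →ₗ[ℝ] ℝ where
  toFun p := ∫ y : sphere (0 : E) 1, p.eval ⟪x, y⟫ ∂(volume : Measure E).toSphere
  map_add' p q := by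
    have integrable_eval (p : ℝ[X]) :
        Integrable (fun y : sphere (0 : E) 1 => p.eval ⟪x, (y : E)⟫)
          (volume : Measure E).toSphere :=
      Continuous.integrable_of_hasCompactSupport (by fun_prop) (.of_compactSpace _)
    simp only [eval_add]
    exact integral_add (integrable_eval p) (integrable_eval q)
  map_smul' a p := by simp [eval_smul, integral_const_mul]

theorem zonalIntegral_apply (x : E) (p : Polynomial ℝ) :
    zonalIntegral x p = ∫ y : sphere (0 : E) 1, p.eval ⟪x, y⟫ ∂(volume : Measure E).toSphere :=
  rfl

/-- Both sides are `2 * ∫ y : E, ⟪x, y⟫ ^ k * exp (-‖y‖ ^ 2)`, in polar coordinates on the left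
and in an orthonormal basis containing `x` on the right. -/
theorem zonalIntegral_X_pow_mul_Gamma {x : E} (hx : ‖x‖ = 1) (k : ℕ) :
    zonalIntegral x (.X ^ k) * Gamma ((Module.finrank ℝ E + k) / 2) =
      2 * ((∫ t : ℝ, t ^ k * exp (-t ^ 2)) * √π ^ (Module.finrank ℝ E - 1)) := by
  have : Nontrivial E := ⟨x, 0, norm_ne_zero_iff.mp (hx ▸ one_ne_zero)⟩
  have hdim : ((Module.finrank ℝ E - 1 : ℕ) : ℝ) = Module.finrank ℝ E - 1 :=
    Nat.cast_pred Module.finrank_pos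
  have polar := integral_homogeneous_smul_comp_norm (volume : Measure E)
    (f := fun y => ⟪x, y⟫ ^ k) (k := k) (fun r y => by rw [inner_smul_right, mul_pow])
    fun r => exp (-r ^ 2)
  simp only [smul_eq_mul, integral_Ioi_pow_mul_exp_neg_sq] at polar
  rw [← integral_comp_inner_mul_exp_neg_norm_sq hx fun t => t ^ k, polar, zonalIntegral_apply]
  push_cast [hdim]
  simp only [Polynomial.eval_pow, Polynomial.eval_X]
  ring_nf

theorem zonalIntegral_one {x : E} (hx : ‖x‖ = 1) :
    zonalIntegral x 1 =
      2 * π ^ ((Module.finrank ℝ E : ℝ) / 2) / Gamma (Module.finrank ℝ E / 2) := by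
  have : Nontrivial E := ⟨x, 0, norm_ne_zero_iff.mp (hx ▸ one_ne_zero)⟩
  have hdim : 0 < Module.finrank ℝ E := Module.finrank_pos
  have moment := zonalIntegral_X_pow_mul_Gamma hx 0
  simp only [pow_zero, one_mul, Nat.cast_zero, add_zero, integral_exp_neg_sq] at moment
  rw [eq_div_iff (Gamma_pos_of_pos (by positivity)).ne', moment, mul_pow_sub_one hdim.ne',
    sqrt_eq_rpow, ← rpow_mul_natCast pi_pos.le, one_div_mul_eq_div]

theorem isGegenbauerFunctional_zonalIntegral {x : E} (hx : ‖x‖ = 1) :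
    IsGegenbauerFunctional ((Module.finrank ℝ E - 2) / 2) (zonalIntegral x) := by
  have : Nontrivial E := ⟨x, 0, norm_ne_zero_iff.mp (hx ▸ one_ne_zero)⟩
  have hdim : 0 < Module.finrank ℝ E := Module.finrank_pos
  have Gamma_pos (k : ℕ) : 0 < Gamma ((Module.finrank ℝ E + k) / 2) :=
    Gamma_pos_of_pos (by positivity)
  apply IsGegenbauerFunctional.of_moments
  · have moment := zonalIntegral_X_pow_mul_Gamma hx 1
    rw [integral_pow_mul_exp_neg_sq_of_odd odd_one, zero_mul, mul_zero, pow_one] at moment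
    exact (mul_eq_zero.mp moment).resolve_right (Gamma_pos 1).ne'
  · intro k
    have moment := zonalIntegral_X_pow_mul_Gamma hx k
    have moment' := zonalIntegral_X_pow_mul_Gamma hx (k + 2)
    rw [integral_pow_add_two_mul_exp_neg_sq,
      show ((Module.finrank ℝ E + (k + 2 : ℕ)) / 2 : ℝ) = (Module.finrank ℝ E + k) / 2 + 1 by
        push_cast; ring,
      Gamma_add_one (by positivity)] at moment'
    apply mul_right_cancel₀ (Gamma_pos k).ne'
    linear_combination 2 * moment' - (k + 1) * moment

theorem integral_gegenbauerKernel_sq {x : E} (hx : ‖x‖ = 1) (hE : 3 ≤ Module.finrank ℝ E) (N : ℕ) :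
    ∫ y : sphere (0 : E) 1, (gegenbauerKernel ((Module.finrank ℝ E - 2) / 2) N).eval ⟪x, y⟫ ^ 2
        ∂(volume : Measure E).toSphere =
      (gegenbauerKernel ((Module.finrank ℝ E - 2) / 2) N).eval 1 * zonalIntegral x 1 := by
  have hE : (3 : ℝ) ≤ Module.finrank ℝ E := by exact_mod_cast hE
  rw [← (isGegenbauerFunctional_zonalIntegral hx).map_gegenbauerKernel_sq (by linarith)
    (by linarith), zonalIntegral_apply]
  simp only [Polynomial.eval_pow]

end Zonal

theorem scalingFn_sq (n j : ℕ) (t : ℝ) :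
    scalingFn n j t ^ 2 =
      (2 ^ (n * j))⁻¹ * (gegenbauerKernel ((n - 1) / 2) (2 ^ (j - 1))).eval t ^ 2 := by
  rw [scalingFn, mul_pow, eval_gegenbauerKernel, ← rpow_mul_natCast zero_le_two, Nat.cast_ofNat,
    div_mul_cancel₀ _ two_ne_zero, rpow_neg zero_le_two, rpow_natCast]

theorem scalingFn_norm_sq_general {E : Type*} [NormedAddCommGroup E] [InnerProductSpace ℝ E]
    [FiniteDimensional ℝ E] [MeasurableSpace E] [BorelSpace E] (n j : ℕ) (hn : 2 ≤ n) (hj : 1 ≤ j)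
    (hE : Module.finrank ℝ E = n + 1) (x : sphere (0 : E) 1) :
    (1 / (2 * π ^ (((n : ℝ) - 1) / 2 + 1) / Gamma (((n : ℝ) - 1) / 2 + 1))) *
        ∫ y : sphere (0 : E) 1, (scalingFn n j ⟪(x : E), (y : E)⟫) ^ 2
          ∂((volume : Measure E).toSphere) =
      (((n + 2 ^ j - 2) * Nat.factorial (n + 2 ^ (j - 1) - 2) : ℕ) : ℝ) /
        ((2 : ℝ) ^ (n * j) * (Nat.factorial n : ℝ) *
          (Nat.factorial (2 ^ (j - 1) - 1) : ℝ)) := by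
  have hx : ‖(x : E)‖ = 1 := norm_eq_of_mem_sphere x
  have hlam : ((Module.finrank ℝ E : ℝ) - 2) / 2 = (n - 1) / 2 := by rw [hE]; push_cast; ring
  have kernel_sq := integral_gegenbauerKernel_sq hx (by omega) (2 ^ (j - 1))
  have mass := zonalIntegral_one hx
  rw [show (Module.finrank ℝ E : ℝ) / 2 = (n - 1) / 2 + 1 by linarith] at mass
  have mass_ne : zonalIntegral (x : E) 1 ≠ 0 := by
    have : (0 : ℝ) < (n - 1) / 2 + 1 := by linarith [(Nat.ofNat_le_cast (α := ℝ)).mpr hn]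
    have := Gamma_pos_of_pos this
    rw [mass]
    positivity
  simp_rw [scalingFn_sq, integral_const_mul]
  rw [← mass, ← hlam, kernel_sq, hlam]
  obtain ⟨d, rfl⟩ := Nat.exists_eq_add_of_le' hn
  obtain ⟨i, rfl⟩ := Nat.exists_eq_add_of_le' hj
  obtain ⟨K, hK⟩ := Nat.exists_eq_add_of_le' (Nat.one_le_two_pow (n := i))
  rw [show d + 2 + 2 ^ (i + 1) - 2 = d + 2 * K + 2 by omega, Nat.add_sub_cancel, hK,
    show d + 2 + (K + 1) - 2 = d + K + 1 by omega, Nat.add_sub_cancel,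
    show (((d + 2 : ℕ) : ℝ) - 1) / 2 = (d + 1) / 2 by push_cast; ring, eval_one_gegenbauerKernel]
  push_cast
  field_simp

/-- The squared `L²`-norm of the weighted scaling function `φ_j(⟨x,·⟩)` equals
`(n+2^j−2)(n+2^{j−1}−2)!/(2^{nj} n! (2^{j−1}−1)!)`; the surface measure `σ` on `S^n` has
total mass `Σ_n = 2π^{λ+1}/Γ(λ+1)` with `λ = (n−1)/2`. -/
theorem scalingFn_norm_sq (n j : ℕ) (hn : 2 ≤ n) (hj : 1 ≤ j)
    (x : sphere (0 : EuclideanSpace ℝ (Fin (n + 1))) 1) :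
    (1 / (2 * π ^ (((n : ℝ) - 1) / 2 + 1) / Real.Gamma (((n : ℝ) - 1) / 2 + 1))) *
        ∫ y : sphere (0 : EuclideanSpace ℝ (Fin (n + 1))) 1,
          (scalingFn n j ⟪(x : EuclideanSpace ℝ (Fin (n + 1))),
              (y : EuclideanSpace ℝ (Fin (n + 1)))⟫) ^ 2
          ∂((volume : Measure (EuclideanSpace ℝ (Fin (n + 1)))).toSphere) =
      (((n + 2 ^ j - 2) * Nat.factorial (n + 2 ^ (j - 1) - 2) : ℕ) : ℝ) /
        ((2 : ℝ) ^ (n * j) * (Nat.factorial n : ℝ) *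
          (Nat.factorial (2 ^ (j - 1) - 1) : ℝ)) :=
  scalingFn_norm_sq_general n j hn hj finrank_euclideanSpace_fin x
end

section
/- Let n ≥ 2, λ = (n−1)/2, j ≥ 1, and let φ_j(t) = 2^{−nj/2} Σ_{l=0}^{2^{j−1}−1} ((l+λ)/λ) C_l^λ(t). Then for every L ≤ 2^{j−1} and every sequence of pairwise distinct points x_1, …, x_L ∈ S^n, the L×L real matrix A with entries A_{ik} = φ_j(⟨x_i, x_k⟩) is positive definite, i.e., Σ_{i,k} c_i c_k φ_j(⟨x_i,x_k⟩) > 0 for all real c_1,…,c_L not all zero. -/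
open Real Finset MeasureTheory Metric
open scoped RealInnerProductSpace

/-!
Write `C_l` for `gegenbauer λ l`, where `2λ + 2` is the dimension of the ambient space. The
polynomial `Z_y(X) = |X|^l C_l(⟨y, X⟩ / |X|)` is harmonic and congruent modulo `|X|²` to a positive
multiple of `⟨y, X⟩^l`. In the Fischer inner product `⟨p, q⟩ = p(∂) q (0)`, multiplication by `|X|²`
is adjoint to the Laplacian and `⟨y, X⟩^l` reproduces, up to the factor `l!`, the value of a
degree-`l` form at `y`. Hence `⟨Z_y, Z_z⟩` is a positive multiple of `Z_z(y) = C_l(⟨y, z⟩)`, so each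
matrix `G_l = (C_l(⟨x_i, x_k⟩))` is a positive multiple of a Gram matrix and is positive
semidefinite.

If the quadratic form of a combination of `G_0, …, G_{N-1}` with positive coefficients vanishes at
`c`, then `G_l c = 0` for every `l < N`. As `C_0, …, C_{N-1}` span the polynomials of degree `< N`,
this gives `∑ i, c_i p(⟨x_k, x_i⟩) = 0` for every such `p` and every `k`; the choice
`p(t) = ∏_{i ≠ k} (t - ⟨x_k, x_i⟩)`, which is nonzero at `⟨x_k, x_k⟩ = 1`, forces `c_k = 0`.
-/

open MvPolynomial Matrix Module
open scoped Nat

section Fischer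

variable {σ R : Type*} [Fintype σ] [CommSemiring R]

/-- The Fischer inner product on polynomials, `⟨p, q⟩ = p(∂) q` evaluated at `0`: monomials are
pairwise orthogonal and `⟨X^m, X^m⟩ = ∏ i, (m i)!`. -/
noncomputable def fischerForm : LinearMap.BilinForm R (MvPolynomial σ R) :=
  (basisMonomials σ R).constr R fun m => ((∏ i, (m i)! : ℕ) : R) • lcoeff R m

/-- The linear form `X ↦ ⟨y, X⟩`, as a polynomial. -/
noncomputable def linearForm (y : σ → R) : MvPolynomial σ R := ∑ i, C (y i) * X i

/-- The derivative in the direction `y`. -/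
noncomputable def dirDeriv (y : σ → R) : Derivation R (MvPolynomial σ R) (MvPolynomial σ R) :=
  ∑ i, y i • pderiv i

/-- The Laplacian `∑ i, ∂²/∂Xᵢ²` on polynomials. -/
noncomputable def polyLaplacian : MvPolynomial σ R →ₗ[R] MvPolynomial σ R :=
  ∑ i, (pderiv i).toLinearMap ∘ₗ (pderiv i).toLinearMap

lemma prod_factorial_add_single (m : σ →₀ ℕ) (i : σ) :
    ∏ k, ((m + Finsupp.single i 1 : σ →₀ ℕ) k)! = (m i + 1) * ∏ k, (m k)! := by
  classical
  have factor (k : σ) :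
      ((m + Finsupp.single i 1 : σ →₀ ℕ) k)! = (if k = i then m i + 1 else 1) * (m k)! := by
    split_ifs with h
    · simp [h, Nat.factorial_succ]
    · simp [Ne.symm h]
  simp only [factor, Finset.prod_mul_distrib, Finset.prod_ite_eq', Finset.mem_univ, if_true]

lemma fischerForm_monomial_left (m : σ →₀ ℕ) (a : R) (q : MvPolynomial σ R) :
    fischerForm (monomial m a) q = a * ((∏ i, (m i)! : ℕ) * coeff m q) := by
  have : (monomial m a : MvPolynomial σ R) = a • basisMonomials σ R m := by
    simp [smul_monomial]
  rw [this, map_smul, fischerForm, Basis.constr_basis]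
  simp

lemma fischerForm_eq_sum {p : MvPolynomial σ R} {s : Finset (σ →₀ ℕ)} (hs : p.support ⊆ s)
    (q : MvPolynomial σ R) :
    fischerForm p q = ∑ m ∈ s, (∏ i, (m i)! : ℕ) * (coeff m p * coeff m q) := by
  have hp : p = ∑ m ∈ s, monomial m (coeff m p) := by
    conv_lhs => rw [p.as_sum]
    exact Finset.sum_subset hs fun m _ hm => by simp [notMem_support_iff.mp hm]
  conv_lhs => rw [hp]
  simp only [map_sum, LinearMap.sum_apply, fischerForm_monomial_left]
  exact Finset.sum_congr rfl fun m _ => by ring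

lemma fischerForm_X_mul (i : σ) (p q : MvPolynomial σ R) :
    fischerForm (X i * p) q = fischerForm p (pderiv i q) := by
  induction p using MvPolynomial.induction_on' with
  | add p p' hp hp' => simp only [mul_add, map_add, LinearMap.add_apply, hp, hp']
  | monomial m a =>
    rw [mul_comm, X, monomial_mul, fischerForm_monomial_left, fischerForm_monomial_left,
      coeff_pderiv, prod_factorial_add_single]
    push_cast
    ring

lemma dirDeriv_apply (y : σ → R) (p : MvPolynomial σ R) :
    dirDeriv y p = ∑ i, y i • pderiv i p := by
  rw [dirDeriv, ← Derivation.coeFnAddMonoidHom_apply, map_sum, Finset.sum_apply]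
  rfl

lemma polyLaplacian_apply (p : MvPolynomial σ R) :
    polyLaplacian p = ∑ i, pderiv i (pderiv i p) := by
  simp [polyLaplacian]

lemma fischerForm_linearForm_mul (y : σ → R) (p q : MvPolynomial σ R) :
    fischerForm (linearForm y * p) q = fischerForm p (dirDeriv y q) := by
  simp only [linearForm, dirDeriv_apply, Finset.sum_mul, C_mul', smul_mul_assoc, map_sum, map_smul,
    LinearMap.sum_apply, LinearMap.smul_apply, fischerForm_X_mul]

lemma fischerForm_psum_two_mul (p q : MvPolynomial σ R) :
    fischerForm (psum σ R 2 * p) q = fischerForm p (polyLaplacian q) := by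
  simp only [psum, polyLaplacian_apply, Finset.sum_mul, sq, mul_assoc, map_sum,
    LinearMap.sum_apply, fischerForm_X_mul]

lemma linearForm_isHomogeneous (y : σ → R) : (linearForm y).IsHomogeneous 1 :=
  .sum _ _ _ fun i _ => isHomogeneous_C_mul_X (y i) i

lemma psum_isHomogeneous (k : ℕ) : (psum σ R k).IsHomogeneous k :=
  .sum _ _ _ fun i _ => isHomogeneous_X_pow i k

lemma eval_linearForm (y z : σ → R) : eval z (linearForm y) = y ⬝ᵥ z := by
  simp [linearForm, dotProduct]

lemma dirDeriv_isHomogeneous (y : σ → R) {p : MvPolynomial σ R} {l : ℕ}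
    (hp : p.IsHomogeneous l) : (dirDeriv y p).IsHomogeneous (l - 1) := by
  rw [dirDeriv_apply]
  simp only [← C_mul']
  exact .sum _ _ _ fun i _ => hp.pderiv.C_mul (y i)

lemma eval_dirDeriv_self (y : σ → R) {p : MvPolynomial σ R} {l : ℕ} (hp : p.IsHomogeneous l) :
    eval y (dirDeriv y p) = l * eval y p := by
  have euler := congrArg (eval y) hp.sum_X_mul_pderiv
  simpa [dirDeriv_apply] using euler

lemma fischerForm_linearForm_pow (y : σ → R) {l : ℕ} {p : MvPolynomial σ R}
    (hp : p.IsHomogeneous l) : fischerForm (linearForm y ^ l) p = l ! * eval y p := by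
  induction l generalizing p with
  | zero =>
    have hp' : p = C (coeff 0 p) :=
      totalDegree_eq_zero_iff_eq_C.mp (Nat.le_zero.mp hp.totalDegree_le)
    rw [pow_zero, show (1 : MvPolynomial σ R) = monomial 0 1 from rfl, fischerForm_monomial_left,
      hp']
    simp
  | succ l ih =>
    rw [pow_succ', fischerForm_linearForm_mul, ih (dirDeriv_isHomogeneous y hp),
      eval_dirDeriv_self y hp, Nat.factorial_succ]
    push_cast
    ring

lemma pderiv_linearForm (i : σ) (y : σ → R) : pderiv i (linearForm y) = C (y i) := by
  classical
  simp [linearForm, Pi.single_apply]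

lemma pderiv_psum_two (i : σ) : pderiv i (psum σ R 2) = 2 * X i := by
  classical
  simp [psum, Pi.single_apply]

lemma dirDeriv_linearForm (y z : σ → R) : dirDeriv y (linearForm z) = C (y ⬝ᵥ z) := by
  simp [dirDeriv_apply, pderiv_linearForm, dotProduct, C_mul']

lemma dirDeriv_psum_two (y : σ → R) : dirDeriv y (psum σ R 2) = 2 * linearForm y := by
  simp only [dirDeriv_apply, pderiv_psum_two, linearForm, Finset.mul_sum, C_mul', mul_smul_comm]

lemma polyLaplacian_linearForm_mul (y : σ → R) (p : MvPolynomial σ R) :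
    polyLaplacian (linearForm y * p) = linearForm y * polyLaplacian p + 2 * dirDeriv y p := by
  have second_deriv (i : σ) : pderiv i (pderiv i (linearForm y * p)) =
      linearForm y * pderiv i (pderiv i p) + 2 * (y i • pderiv i p) := by
    simp only [pderiv_mul, pderiv_linearForm, map_add, pderiv_C, ← C_mul']
    ring
  simp only [polyLaplacian_apply, dirDeriv_apply, second_deriv, Finset.sum_add_distrib,
    Finset.mul_sum]

lemma polyLaplacian_psum_two_mul {l : ℕ} {p : MvPolynomial σ R} (hp : p.IsHomogeneous l) :
    polyLaplacian (psum σ R 2 * p) =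
      psum σ R 2 * polyLaplacian p + (2 * Fintype.card σ + 4 * l : ℕ) * p := by
  have second_deriv (i : σ) : pderiv i (pderiv i (psum σ R 2 * p)) =
      psum σ R 2 * pderiv i (pderiv i p) + 4 * (X i * pderiv i p) + 2 * p := by
    have : pderiv i (2 : MvPolynomial σ R) = 0 := by
      rw [← map_ofNat C 2, pderiv_C]
    simp only [pderiv_mul, pderiv_psum_two, map_add, this, pderiv_X_self]
    ring
  simp only [polyLaplacian_apply, second_deriv, Finset.sum_add_distrib, ← Finset.mul_sum,
    hp.sum_X_mul_pderiv, nsmul_eq_mul, Finset.sum_const, Finset.card_univ]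
  push_cast
  ring

end Fischer

section ZonalHarmonic

variable {σ : Type*} [Fintype σ]

lemma posSemidef_fischerForm {ι : Type*} [Finite ι] (p : ι → MvPolynomial σ ℝ) :
    (Matrix.of fun i k => fischerForm (p i) (p k)).PosSemidef := by
  classical
  have := Fintype.ofFinite ι
  let s := Finset.univ.biUnion fun i => (p i).support
  have gram_eq : (Matrix.of fun i k => fischerForm (p i) (p k)) =
      ∑ m ∈ s, ((∏ a, (m a)! : ℕ) : ℝ) •
        vecMulVec (fun i => coeff m (p i)) (star fun i => coeff m (p i)) := by
    ext i k
    have hs : (p i).support ⊆ s :=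
      Finset.subset_biUnion_of_mem (fun i => (p i).support) (Finset.mem_univ i)
    simp [fischerForm_eq_sum hs, Matrix.sum_apply, vecMulVec_apply]
  rw [gram_eq]
  exact posSemidef_sum s fun m _ => (posSemidef_vecMulVec_self_star _).smul (Nat.cast_nonneg _)

/-- The solid zonal polynomial of degree `l` with pole `y`: the homogenization
`|X|^l C_l^λ(⟨y, X⟩ / |X|)` of the Gegenbauer polynomial, given by the homogenized recurrence.
Here `psum σ ℝ 2` is `|X|²`. -/
noncomputable def solidZonal (lam : ℝ) (y : σ → ℝ) : ℕ → MvPolynomial σ ℝ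
  | 0 => 1
  | 1 => (2 * lam) • linearForm y
  | l + 2 => (l + 2 : ℝ)⁻¹ •
      ((2 * (l + 1 + lam)) • (linearForm y * solidZonal lam y (l + 1))
        - (l + 2 * lam) • (psum σ ℝ 2 * solidZonal lam y l))

variable (lam : ℝ) (y : σ → ℝ)

lemma solidZonal_recurrence (l : ℕ) :
    (l + 2 : ℝ) • solidZonal lam y (l + 2) =
      (2 * (l + 1 + lam)) • (linearForm y * solidZonal lam y (l + 1))
        - (l + 2 * lam) • (psum σ ℝ 2 * solidZonal lam y l) := by
  rw [solidZonal, smul_inv_smul₀ (by positivity)]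

lemma solidZonal_isHomogeneous : ∀ l, (solidZonal lam y l).IsHomogeneous l
  | 0 => isHomogeneous_one _ _
  | 1 => (homogeneousSubmodule σ ℝ 1).smul_mem _ (linearForm_isHomogeneous y)
  | l + 2 => by
    have hS := (linearForm_isHomogeneous y).mul (solidZonal_isHomogeneous (l + 1))
    have hR := (psum_isHomogeneous 2).mul (solidZonal_isHomogeneous l)
    rw [show 1 + (l + 1) = l + 2 by ring] at hS
    rw [add_comm] at hR
    let V := homogeneousSubmodule σ ℝ (l + 2)
    rw [solidZonal]
    exact V.smul_mem _ (V.sub_mem (V.smul_mem _ hS) (V.smul_mem _ hR))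

lemma eval_solidZonal {z : σ → ℝ} (hz : z ⬝ᵥ z = 1) :
    ∀ l, eval z (solidZonal lam y l) = gegenbauer lam l (y ⬝ᵥ z)
  | 0 => by simp [solidZonal, gegenbauer]
  | 1 => by simp [solidZonal, gegenbauer, eval_linearForm]
  | l + 2 => by
    have hR : eval z (psum σ ℝ 2) = 1 := by simpa [psum, dotProduct, sq] using hz
    rw [solidZonal, gegenbauer]
    simp only [smul_eval, map_sub, map_mul, eval_linearForm, hR, eval_solidZonal hz l,
      eval_solidZonal hz (l + 1)]
    ring

lemma psum_two_dvd_solidZonal_sub : ∀ l, psum σ ℝ 2 ∣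
    solidZonal lam y l - (∏ k ∈ Finset.range l, 2 * (k + lam) / (k + 1)) • linearForm y ^ l
  | 0 => by simp [solidZonal]
  | 1 => by simp [solidZonal]
  | l + 2 => by
    obtain ⟨g, hg⟩ := psum_two_dvd_solidZonal_sub (l + 1)
    refine ⟨(l + 2 : ℝ)⁻¹ • ((2 * (l + 1 + lam)) • (linearForm y * g)
      - (l + 2 * lam) • solidZonal lam y l), ?_⟩
    have last_factor : 2 * ((l + 1 : ℕ) + lam) / ((l + 1 : ℕ) + 1) =
        (l + 2 : ℝ)⁻¹ * (2 * (l + 1 + lam)) := by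
      push_cast; ring
    rw [solidZonal, Finset.prod_range_succ, last_factor, sub_eq_iff_eq_add'.mp hg]
    simp only [smul_eq_C_mul, C_mul]
    ring

variable {lam y}

lemma dirDeriv_solidZonal_recurrence (hy : y ⬝ᵥ y = 1) (l : ℕ) :
    (l + 2 : ℝ) • dirDeriv y (solidZonal lam y (l + 2)) =
      (2 * (l + 1 + lam)) •
          (linearForm y * dirDeriv y (solidZonal lam y (l + 1)) + solidZonal lam y (l + 1))
        - (l + 2 * lam) •
          (psum σ ℝ 2 * dirDeriv y (solidZonal lam y l)
            + 2 * (linearForm y * solidZonal lam y l)) := by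
  rw [← Derivation.map_smul, solidZonal_recurrence]
  simp only [map_sub, Derivation.map_smul, Derivation.leibniz, dirDeriv_linearForm, hy,
    dirDeriv_psum_two, smul_eq_mul, map_one]
  simp only [smul_eq_C_mul]
  ring

lemma dirDeriv_solidZonal (hy : y ⬝ᵥ y = 1) (l : ℕ) :
    dirDeriv y (solidZonal lam y (l + 1)) = (l + 2 * lam) • solidZonal lam y l := by
  induction l using Nat.twoStepInduction with
  | zero => simp [solidZonal, dirDeriv_linearForm, hy]
  | one =>
    refine smul_right_injective _ (show ((0 : ℕ) + 2 : ℝ) ≠ 0 by norm_num) ?_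
    dsimp only
    rw [dirDeriv_solidZonal_recurrence hy 0]
    simp only [solidZonal, Derivation.map_smul, Derivation.map_one_eq_zero, dirDeriv_linearForm, hy]
    push_cast
    simp only [smul_eq_C_mul, map_add, map_mul, map_ofNat, map_one, map_zero]
    ring
  | more l ih ih' =>
    refine smul_right_injective _ (show ((l + 1 : ℕ) + 2 : ℝ) ≠ 0 by positivity) ?_
    dsimp only
    have recurrence := solidZonal_recurrence lam y l
    rw [dirDeriv_solidZonal_recurrence hy (l + 1), ih, ih']
    push_cast
    simp only [smul_eq_C_mul, map_add, map_mul, map_ofNat, map_natCast, map_one] at recurrence ⊢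
    linear_combination - (l + 1 + 2 * C lam) * recurrence

lemma polyLaplacian_solidZonal (hlam : (Fintype.card σ : ℝ) = 2 * lam + 2) (hy : y ⬝ᵥ y = 1) :
    ∀ l, polyLaplacian (solidZonal lam y l) = 0
  | 0 => by simp [solidZonal, polyLaplacian_apply]
  | 1 => by simp [solidZonal, polyLaplacian_apply, pderiv_linearForm]
  | l + 2 => by
    have hlam' : (Fintype.card σ : MvPolynomial σ ℝ) = 2 * C lam + 2 := by
      have h := congrArg (C (σ := σ)) hlam
      simpa only [map_natCast, map_add, map_mul, map_ofNat] using h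
    rw [solidZonal, map_smul, map_sub, map_smul, map_smul, polyLaplacian_linearForm_mul,
      polyLaplacian_psum_two_mul (solidZonal_isHomogeneous lam y l), dirDeriv_solidZonal hy l,
      polyLaplacian_solidZonal hlam hy l, polyLaplacian_solidZonal hlam hy (l + 1)]
    refine smul_eq_zero_of_right _ ?_
    push_cast
    simp only [smul_eq_C_mul, map_add, map_mul, map_ofNat, map_natCast, map_one, hlam']
    ring

lemma fischerForm_solidZonal (hlam : (Fintype.card σ : ℝ) = 2 * lam + 2) (l : ℕ) {y z : σ → ℝ}
    (hy : y ⬝ᵥ y = 1) (hz : z ⬝ᵥ z = 1) :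
    fischerForm (solidZonal lam y l) (solidZonal lam z l) =
      (∏ k ∈ Finset.range l, 2 * (k + lam) / (k + 1)) * l ! * gegenbauer lam l (y ⬝ᵥ z) := by
  obtain ⟨g, hg⟩ := psum_two_dvd_solidZonal_sub lam y l
  rw [sub_eq_iff_eq_add'.mp hg, map_add, LinearMap.add_apply, fischerForm_psum_two_mul,
    polyLaplacian_solidZonal hlam hz, map_zero, add_zero, map_smul, LinearMap.smul_apply,
    fischerForm_linearForm_pow y (solidZonal_isHomogeneous lam z l), eval_solidZonal lam z hy,
    dotProduct_comm, smul_eq_mul, mul_assoc]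

lemma posSemidef_gegenbauer_dotProduct {ι : Type*} [Finite ι] (hpos : 0 < lam)
    (hlam : (Fintype.card σ : ℝ) = 2 * lam + 2) (l : ℕ) {x : ι → σ → ℝ}
    (hx : ∀ i, x i ⬝ᵥ x i = 1) :
    (Matrix.of fun i k => gegenbauer lam l (x i ⬝ᵥ x k)).PosSemidef := by
  let b : ℝ := (∏ k ∈ Finset.range l, 2 * (k + lam) / (k + 1)) * (l ! : ℝ)
  have hb : 0 < b := by positivity
  have gram_eq : (Matrix.of fun i k => gegenbauer lam l (x i ⬝ᵥ x k)) =
      b⁻¹ • Matrix.of fun i k =>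
        fischerForm (solidZonal lam (x i) l) (solidZonal lam (x k) l) := by
    ext i k
    rw [Matrix.smul_apply, of_apply, of_apply, fischerForm_solidZonal hlam l (hx i) (hx k),
      smul_eq_mul, inv_mul_cancel_left₀ hb.ne']
  rw [gram_eq]
  exact (posSemidef_fischerForm _).smul (inv_nonneg.mpr hb.le)

end ZonalHarmonic

section InnerProductSpace

variable {E ι : Type*} [NormedAddCommGroup E] [InnerProductSpace ℝ E] {lam : ℝ}

lemma posSemidef_gegenbauer_inner [Finite ι] (hpos : 0 < lam)
    (hlam : (finrank ℝ E : ℝ) = 2 * lam + 2) (l : ℕ) {x : ι → E} (hx : ∀ i, ‖x i‖ = 1) :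
    (Matrix.of fun i k => gegenbauer lam l ⟪x i, x k⟫).PosSemidef := by
  have : FiniteDimensional ℝ E :=
    .of_finrank_pos (by rw [← Nat.cast_pos (α := ℝ), hlam]; positivity)
  let b := stdOrthonormalBasis ℝ E
  have inner_eq (v w : E) : ⟪v, w⟫ = (b.repr v).ofLp ⬝ᵥ (b.repr w).ofLp := by
    rw [← b.repr.inner_map_map, EuclideanSpace.inner_eq_star_dotProduct, star_trivial,
      dotProduct_comm]
  simp only [inner_eq]
  refine posSemidef_gegenbauer_dotProduct hpos (by rwa [Fintype.card_fin]) l fun i => ?_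
  rw [← inner_eq, real_inner_self_eq_norm_sq, hx, one_pow]

lemma pow_mul_gegenbauer_mem {V : Submodule ℝ (ℝ → ℝ)} {N : ℕ} (hpos : 0 < lam)
    (hV : ∀ l < N, gegenbauer lam l ∈ V) (k l : ℕ) (hkl : k + l < N) :
    (fun t => t ^ k * gegenbauer lam l t) ∈ V := by
  induction k generalizing l with
  | zero => simpa using hV l (by lia)
  | succ k ih =>
    cases l with
    | zero =>
      have recurrence : (fun t => t ^ (k + 1) * gegenbauer lam 0 t) =
          (2 * lam)⁻¹ • fun t => t ^ k * gegenbauer lam 1 t := by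
        ext t
        simp only [gegenbauer, Pi.smul_apply, smul_eq_mul]
        field_simp
        ring
      exact recurrence ▸ V.smul_mem _ (ih 1 (by lia))
    | succ l =>
      have recurrence : (fun t => t ^ (k + 1) * gegenbauer lam (l + 1) t) =
          (2 * (l + 1 + lam))⁻¹ • ((l + 2 : ℝ) • (fun t => t ^ k * gegenbauer lam (l + 2) t)
            + (l + 2 * lam) • fun t => t ^ k * gegenbauer lam l t) := by
        ext t
        simp only [gegenbauer, Pi.add_apply, Pi.smul_apply, smul_eq_mul]
        field_simp
        ring
      rw [recurrence]
      exact V.smul_mem _ (V.add_mem (V.smul_mem _ (ih (l + 2) (by lia)))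
        (V.smul_mem _ (ih l (by lia))))

lemma polynomial_eval_mem_of_gegenbauer_mem {V : Submodule ℝ (ℝ → ℝ)} {N : ℕ} (hpos : 0 < lam)
    (hV : ∀ l < N, gegenbauer lam l ∈ V) {p : Polynomial ℝ} (hp : p.natDegree < N) :
    (fun t => p.eval t) ∈ V := by
  have eval_eq_sum : (fun t => p.eval t) =
      ∑ k ∈ Finset.range (p.natDegree + 1), p.coeff k • fun t => t ^ k * gegenbauer lam 0 t := by
    ext t
    simp [p.eval_eq_sum_range, gegenbauer]
  rw [eval_eq_sum]
  refine V.sum_mem fun k hk => V.smul_mem _ (pow_mul_gegenbauer_mem hpos hV k 0 ?_)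
  have := Finset.mem_range.mp hk
  lia

lemma sum_mul_polynomial_eval_eq_zero [Fintype ι] {N : ℕ} (hpos : 0 < lam) {c t : ι → ℝ}
    (hc : ∀ l < N, ∑ i, c i * gegenbauer lam l (t i) = 0) {p : Polynomial ℝ}
    (hp : p.natDegree < N) : ∑ i, c i * p.eval (t i) = 0 := by
  let V : Submodule ℝ (ℝ → ℝ) := LinearMap.ker (∑ i, c i • (LinearMap.proj (t i) : (ℝ → ℝ) →ₗ[ℝ] ℝ))
  have mem_iff (f : ℝ → ℝ) : f ∈ V ↔ ∑ i, c i * f (t i) = 0 := by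
    simp [V, LinearMap.mem_ker]
  simp only [← mem_iff] at hc
  exact (mem_iff _).mp (polynomial_eval_mem_of_gegenbauer_mem hpos hc hp)

lemma eq_zero_of_forall_gegenbauer_mulVec_eq_zero [Fintype ι] {N : ℕ} (hpos : 0 < lam)
    (hN : Fintype.card ι ≤ N) {x : ι → E} (hx : ∀ i, ‖x i‖ = 1) (hinj : Function.Injective x)
    {c : ι → ℝ} (hc : ∀ l < N, (Matrix.of fun i k => gegenbauer lam l ⟪x i, x k⟫) *ᵥ c = 0) :
    c = 0 := by
  classical
  ext k
  let p := Lagrange.nodal (Finset.univ.erase k) fun i => ⟪x k, x i⟫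
  have hp : p.natDegree < N := by
    have : 0 < Fintype.card ι := Fintype.card_pos_iff.mpr ⟨k⟩
    rw [Lagrange.natDegree_nodal, Finset.card_erase_of_mem (Finset.mem_univ k), Finset.card_univ]
    lia
  have annihilates : ∑ i, c i * p.eval ⟪x k, x i⟫ = 0 := by
    refine sum_mul_polynomial_eval_eq_zero hpos (fun l hl => ?_) hp
    simpa [mulVec, dotProduct, mul_comm] using congrFun (hc l hl) k
  have eval_off (i : ι) (hi : i ≠ k) : p.eval ⟪x k, x i⟫ = 0 :=
    Lagrange.eval_nodal_at_node (v := fun i => ⟪x k, x i⟫)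
      (Finset.mem_erase.mpr ⟨hi, Finset.mem_univ i⟩)
  have eval_self : p.eval ⟪x k, x k⟫ ≠ 0 := by
    refine Lagrange.eval_nodal_not_at_node fun i hi => ?_
    rw [real_inner_self_eq_norm_sq, hx, one_pow, ne_comm, Ne,
      inner_eq_one_iff_of_norm_eq_one (hx k) (hx i)]
    exact fun h => Finset.ne_of_mem_erase hi (hinj h).symm
  rw [Fintype.sum_eq_single k fun i hi => by rw [eval_off i hi, mul_zero]] at annihilates
  exact (mul_eq_zero.mp annihilates).resolve_right eval_self

theorem posDef_sum_gegenbauer_inner [Fintype ι] {N : ℕ} (hpos : 0 < lam)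
    (hlam : (finrank ℝ E : ℝ) = 2 * lam + 2) (hN : Fintype.card ι ≤ N) {a : ℕ → ℝ}
    (ha : ∀ l < N, 0 < a l) {x : ι → E} (hx : ∀ i, ‖x i‖ = 1) (hinj : Function.Injective x) :
    (∑ l ∈ Finset.range N,
      a l • Matrix.of fun i k => gegenbauer lam l ⟪x i, x k⟫).PosDef := by
  let G (l : ℕ) : Matrix ι ι ℝ := Matrix.of fun i k => gegenbauer lam l ⟪x i, x k⟫
  have hG (l : ℕ) : (G l).PosSemidef := posSemidef_gegenbauer_inner hpos hlam l hx
  have haG : ∀ l ∈ Finset.range N, (a l • G l).PosSemidef := fun l hl =>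
    (hG l).smul (ha l (Finset.mem_range.mp hl)).le
  have hsum := posSemidef_sum _ haG
  refine .of_dotProduct_mulVec_pos hsum.isHermitian fun c hc =>
    (hsum.dotProduct_mulVec_nonneg c).lt_of_ne' fun hzero => hc ?_
  refine eq_zero_of_forall_gegenbauer_mulVec_eq_zero hpos hN hx hinj fun l hl => ?_
  rw [sum_mulVec, dotProduct_sum, Finset.sum_eq_zero_iff_of_nonneg
    fun l hl => (haG l hl).dotProduct_mulVec_nonneg c] at hzero
  have hl_zero := hzero l (Finset.mem_range.mpr hl)
  rw [smul_mulVec, dotProduct_smul, smul_eq_zero_iff_right (ha l hl).ne'] at hl_zero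
  exact ((hG l).dotProduct_mulVec_zero_iff c).mp hl_zero

theorem scalingFn_strictly_positive_definite_general [Fintype ι] {n : ℕ} (hn : 2 ≤ n)
    (hE : finrank ℝ E = n + 1) (j : ℕ) (hcard : Fintype.card ι ≤ 2 ^ j)
    {x : ι → sphere (0 : E) 1} (hx : Function.Injective x) :
    (Matrix.of fun i k => scalingFn n (j + 1) ⟪(x i : E), x k⟫).PosDef := by
  let lam : ℝ := (n - 1) / 2
  have hpos : 0 < lam := by
    have : (2 : ℝ) ≤ n := mod_cast hn
    exact div_pos (by linarith) two_pos
  let a (l : ℕ) : ℝ := 2 ^ (-((n * (j + 1) : ℕ) : ℝ) / 2) * ((l + lam) / lam)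
  have matrix_eq : (Matrix.of fun i k => scalingFn n (j + 1) ⟪(x i : E), x k⟫) =
      ∑ l ∈ Finset.range (2 ^ j), a l • Matrix.of fun i k => gegenbauer lam l ⟪(x i : E), x k⟫ := by
    ext i k
    simp [scalingFn, a, lam, Matrix.sum_apply, Finset.mul_sum, mul_assoc]
  rw [matrix_eq]
  refine posDef_sum_gegenbauer_inner hpos ?_ hcard (fun l _ => by positivity)
    (fun i => norm_eq_of_mem_sphere (x i)) (Subtype.val_injective.comp hx)
  rw [hE]
  push_cast
  ring

end InnerProductSpace

/-- The weighted scaling function `φ_j` is strictly positive definite of cardinality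
`2^{j−1}` on `S^n`: for at most `2^{j−1}` pairwise distinct points the Gramian matrix
is positive definite. -/
theorem scalingFn_strictly_positive_definite (n j : ℕ) (hn : 2 ≤ n) (hj : 1 ≤ j)
    (L : ℕ) (hL : L ≤ 2 ^ (j - 1))
    (x : Fin L → sphere (0 : EuclideanSpace ℝ (Fin (n + 1))) 1)
    (hx : Function.Injective x) (c : Fin L → ℝ) (hc : c ≠ 0) :
    0 < ∑ i : Fin L, ∑ k : Fin L,
        c i * c k *
          scalingFn n j ⟪(x i : EuclideanSpace ℝ (Fin (n + 1))),
            (x k : EuclideanSpace ℝ (Fin (n + 1)))⟫ := by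
  obtain ⟨j, rfl⟩ := Nat.exists_eq_add_of_le' hj
  have posDef := scalingFn_strictly_positive_definite_general hn finrank_euclideanSpace_fin j
    (by rwa [Fintype.card_fin]) hx
  simpa [mulVec, dotProduct, Finset.mul_sum, mul_assoc, mul_comm, mul_left_comm] using
    posDef.dotProduct_mulVec_pos hc
end
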